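/- arXiv:1502.07289 — 4 statements merged into one kernel-verified Lean document; each statement's English description precedes it below -/
import Mathlib

section
/- Let k ≥ 3 and 1 ≤ j ≤ k−1 be integers, let s ≥ 0 be a fixed integer, and suppose p = (j·log n + s·log log n + c_n)/C(n,k−j) where c_n = o(log n) and c_n → −∞. Let D_s be the number of j-sets of degree exactly s in H^k(n,p). Then D_s → ∞ with high probability, i.e. for every constant K, Pr(D_s > K) → 1 as n → ∞. -/
open Filter Asymptotics

open scoped Classical

noncomputable section

/-- The collection of all `k`-element subsets of the vertex set `Fin n`,
    i.e. all potential edges of a `k`-uniform hypergraph on `n` vertices. -/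
def kSets (n k : ℕ) : Finset (Finset (Fin n)) :=
  Finset.powersetCard k (Finset.univ : Finset (Fin n))

/-- The probability that the binomial random `k`-uniform hypergraph `H^k(n,p)`
    (each `k`-set an edge independently with probability `p`) has property `Q`. -/
def binomProb (n k : ℕ) (p : ℝ) (Q : Finset (Finset (Fin n)) → Prop) : ℝ :=
  ∑ H ∈ (kSets n k).powerset,
    (if Q H then p ^ H.card * (1 - p) ^ ((kSets n k).card - H.card) else 0)

/-- The expectation of a real-valued random variable `X` of `H^k(n,p)`. -/
def binomExp (n k : ℕ) (p : ℝ) (X : Finset (Finset (Fin n)) → ℝ) : ℝ :=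
  ∑ H ∈ (kSets n k).powerset,
    p ^ H.card * (1 - p) ^ ((kSets n k).card - H.card) * X H

/-- The degree of a vertex set `J` in the hypergraph with edge set `H`:
    the number of edges containing `J`. -/
def setDegree {n : ℕ} (H : Finset (Finset (Fin n))) (J : Finset (Fin n)) : ℕ :=
  (H.filter (fun e => J ⊆ e)).card

/-- `J` is isolated in `H`: it is contained in no edge. -/
def IsIsolatedSet {n : ℕ} (H : Finset (Finset (Fin n))) (J : Finset (Fin n)) : Prop :=
  ∀ e ∈ H, ¬ J ⊆ e

/-- Two sets `J1`, `J2` are `j`-connected in the hypergraph with edge set `H`: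
    there is a walk of edges from one to the other in which consecutive edges
    intersect in at least `j` vertices. -/
def JConn {n : ℕ} (j : ℕ) (H : Finset (Finset (Fin n))) (J1 J2 : Finset (Fin n)) : Prop :=
  ∃ e1 ∈ H, ∃ e2 ∈ H, J1 ⊆ e1 ∧ J2 ⊆ e2 ∧
    Relation.ReflTransGen (fun e f => e ∈ H ∧ f ∈ H ∧ j ≤ (e ∩ f).card) e1 e2

/-- The hypergraph with edge set `H` is `j`-connected:
    all `j`-sets lie in a single `j`-component, i.e. are pairwise `j`-connected. -/
def JConnectedHG (n j : ℕ) (H : Finset (Finset (Fin n))) : Prop :=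
  ∀ J1 J2 : Finset (Fin n), J1.card = j → J2.card = j → JConn j H J1 J2

/-- `C` is a `j`-component of `H`: a maximal nonempty set of pairwise `j`-connected `j`-sets. -/
def IsJComponent (n j : ℕ) (H : Finset (Finset (Fin n))) (C : Finset (Finset (Fin n))) : Prop :=
  C.Nonempty ∧ (∀ J ∈ C, J.card = j) ∧ (∀ J1 ∈ C, ∀ J2 ∈ C, JConn j H J1 J2) ∧
    ∀ J : Finset (Fin n), J.card = j → (∃ J' ∈ C, JConn j H J J') → J ∈ C

/-- `D_s`: the number of `j`-sets of degree exactly `s`. -/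
def numDegSets (n j s : ℕ) (H : Finset (Finset (Fin n))) : ℕ :=
  ((Finset.powersetCard j (Finset.univ : Finset (Fin n))).filter
    (fun J => setDegree H J = s)).card

/-- The Poisson probability mass function with mean `lam`. -/
def poissonPMF (lam : ℝ) (i : ℕ) : ℝ := Real.exp (-lam) * lam ^ i / (Nat.factorial i)

/-- Total variation distance between the distribution of `D_s` in `H^k(n,p)`
    and the Poisson distribution with mean `lam`. -/
def dTVpoisson (n k j s : ℕ) (p lam : ℝ) : ℝ :=
  (1 / 2) * ∑' i : ℕ, |binomProb n k p (fun H => numDegSets n j s H = i) - poissonPMF lam i|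

/-- The probability that the uniform random hypergraph `H^k(n,M)` (chosen uniformly among
    all `k`-uniform hypergraphs on `Fin n` with exactly `M` edges) has property `Q`. -/
def uniformProb (n k M : ℕ) (Q : Finset (Finset (Fin n)) → Prop) : ℝ :=
  (((Finset.powersetCard M (kSets n k)).filter Q).card : ℝ) /
    ((Finset.powersetCard M (kSets n k)).card : ℝ)


def wt {α : Type*} (E : Finset α) (p : ℝ) (H : Finset α) : ℝ :=
  p ^ H.card * (1 - p) ^ (E.card - H.card)

def bb (p : ℝ) (m t : ℕ) : ℝ := (m.choose t : ℝ) * (p ^ t * (1 - p) ^ (m - t))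

lemma wt_sum {α : Type*} (E : Finset α) (p : ℝ) : ∑ H ∈ E.powerset, wt E p H = 1 := by
  unfold wt
  rw [Finset.sum_pow_mul_eq_add_pow]; simp

lemma wt_nonneg {α : Type*} (E : Finset α) (p : ℝ) (h0 : 0 ≤ p) (h1 : p ≤ 1) (H : Finset α) :
    0 ≤ wt E p H := by
  unfold wt
  have : 0 ≤ 1 - p := by linarith
  positivity

lemma split_sum {α : Type*} (A B : Finset α) (hAB : Disjoint A B) (p : ℝ)
    (f : Finset α → ℝ) :
    ∑ H ∈ (A ∪ B).powerset, wt (A ∪ B) p H * f H =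
      ∑ S ∈ A.powerset, ∑ T ∈ B.powerset, wt A p S * wt B p T * f (S ∪ T) := by
  rw [← Finset.sum_product']
  symm
  refine Finset.sum_bij' (fun x _ => x.1 ∪ x.2) (fun H _ => (H ∩ A, H ∩ B)) ?_ ?_ ?_ ?_ ?_
  · intro x hx
    simp only [Finset.mem_product, Finset.mem_powerset] at hx ⊢
    exact Finset.union_subset_union hx.1 hx.2
  · intro H hH
    simp
  · rintro ⟨S, T⟩ hx
    simp only [Finset.mem_product, Finset.mem_powerset] at hx
    obtain ⟨hS, hT⟩ := hx
    rw [Finset.disjoint_left] at hAB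
    ext a
    · simp only [Finset.mem_inter, Finset.mem_union]
      constructor
      · rintro ⟨h | h, h2⟩
        · exact h
        · exact absurd (hT h) (hAB h2)
      · exact fun h => ⟨Or.inl h, hS h⟩
    · simp only [Finset.mem_inter, Finset.mem_union]
      constructor
      · rintro ⟨h | h, h2⟩
        · exact absurd h2 (hAB (hS h))
        · exact h
      · exact fun h => ⟨Or.inr h, hT h⟩
  · intro H hH
    simp only [Finset.mem_powerset] at hH
    simp only
    rw [← Finset.inter_union_distrib_left]
    exact Finset.inter_eq_left.mpr hH
  · rintro ⟨S, T⟩ hx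
    simp only [Finset.mem_product, Finset.mem_powerset] at hx
    obtain ⟨hS, hT⟩ := hx
    have hd : Disjoint S T := Disjoint.mono hS hT hAB
    have e1 := Finset.card_le_card hS
    have e2 := Finset.card_le_card hT
    congr 1
    unfold wt
    rw [Finset.card_union_of_disjoint hd, Finset.card_union_of_disjoint hAB,
      show A.card + B.card - (S.card + T.card) = (A.card - S.card) + (B.card - T.card) by omega,
      pow_add, pow_add]
    ring

lemma wt_card {α : Type*} (A : Finset α) (p : ℝ) (t : ℕ) :
    ∑ S ∈ A.powerset, wt A p S * (if S.card = t then 1 else 0) = bb p A.card t := by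
  simp only [mul_ite, mul_one, mul_zero]
  rw [← Finset.sum_filter, ← Finset.powersetCard_eq_filter]
  unfold wt bb
  rw [Finset.sum_congr rfl (g := fun _ => p ^ t * (1 - p) ^ (A.card - t))]
  · simp
  · intro S hS
    rw [(Finset.mem_powersetCard.mp hS).2]

lemma filt_union {α : Type*} (q : α → Prop) [DecidablePred q] (E : Finset α) :
    E.filter q ∪ E.filter (fun e => ¬ q e) = E := Finset.filter_union_filter_not_eq q E

lemma wt_deg {α : Type*} (E : Finset α) (p : ℝ) (q : α → Prop) [DecidablePred q] (t : ℕ) :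
    ∑ H ∈ E.powerset, wt E p H * (if (H.filter q).card = t then 1 else 0)
      = bb p (E.filter q).card t := by
  have h := split_sum (E.filter q) (E.filter (fun e => ¬ q e))
    (Finset.disjoint_filter_filter_not E E q) p
    (fun H => if (H.filter q).card = t then 1 else 0)
  rw [filt_union] at h
  rw [h, ← wt_card]
  refine Finset.sum_congr rfl fun S hS => ?_
  have : ∀ T ∈ (E.filter (fun e => ¬ q e)).powerset, ((S ∪ T).filter q) = S := by
    intro T hT
    rw [Finset.mem_powerset] at hS hT
    ext a
    have := @hS a
    have := @hT a
    simp only [Finset.mem_filter, Finset.mem_union] at *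
    tauto
  rw [Finset.sum_congr rfl (g := fun T => wt (E.filter (fun e => ¬ q e)) p T *
    (wt (E.filter q) p S * (if S.card = t then 1 else 0)))]
  · rw [← Finset.sum_mul, wt_sum, one_mul]
  · intro T hT
    simp only [this T hT]
    ring

lemma wt_joint {α : Type*} (E : Finset α) (p : ℝ) (h0 : 0 ≤ p) (h1 : p ≤ 1)
    (q1 q2 : α → Prop) [DecidablePred q1] [DecidablePred q2] (s : ℕ) (Bd : ℝ)
    (hBd : ∀ t ≤ s, bb p (E.filter (fun e => ¬ q1 e ∧ q2 e)).card t ≤ Bd) :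
    ∑ H ∈ E.powerset, wt E p H * ((if (H.filter q1).card = s then 1 else 0) *
      (if (H.filter q2).card = s then 1 else 0))
      ≤ bb p (E.filter q1).card s * Bd := by
  have h := split_sum (E.filter q1) (E.filter (fun e => ¬ q1 e))
    (Finset.disjoint_filter_filter_not E E q1) p
    (fun H => (if (H.filter q1).card = s then 1 else 0) *
      (if (H.filter q2).card = s then 1 else 0))
  rw [filt_union] at h
  have hB0 : 0 ≤ Bd := by
    refine le_trans ?_ (hBd 0 (Nat.zero_le _))
    unfold bb
    have : 0 ≤ 1 - p := by linarith
    positivity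
  rw [h, ← wt_card, Finset.sum_mul]
  refine Finset.sum_le_sum fun S hS => ?_
  rw [Finset.mem_powerset] at hS
  have hS1 : ∀ T ∈ (E.filter (fun e => ¬ q1 e)).powerset, ((S ∪ T).filter q1) = S := by
    intro T hT
    rw [Finset.mem_powerset] at hT
    ext a
    have := @hS a
    have := @hT a
    simp only [Finset.mem_filter, Finset.mem_union] at *
    tauto
  have hS2 : ∀ T ∈ (E.filter (fun e => ¬ q1 e)).powerset,
      ((S ∪ T).filter q2).card = (S.filter q2).card + (T.filter q2).card := by
    intro T hT
    rw [Finset.mem_powerset] at hT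
    rw [Finset.filter_union, Finset.card_union_of_disjoint]
    refine Disjoint.mono ((Finset.filter_subset _ _).trans hS)
      ((Finset.filter_subset _ _).trans hT) (Finset.disjoint_filter_filter_not E E q1)
  have hw := wt_nonneg (E.filter q1) p h0 h1 S
  by_cases hc : S.card = s
  · rw [Finset.sum_congr rfl (g := fun T => wt (E.filter q1) p S *
      (wt (E.filter (fun e => ¬ q1 e)) p T *
       (if (S.filter q2).card + (T.filter q2).card = s then 1 else 0)))]
    · rw [← Finset.mul_sum, if_pos hc, mul_one]
      refine mul_le_mul_of_nonneg_left ?_ hw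
      by_cases hs : (S.filter q2).card ≤ s
      · have := wt_deg (E.filter (fun e => ¬ q1 e)) p q2 (s - (S.filter q2).card)
        rw [Finset.filter_filter] at this
        have h2 := hBd (s - (S.filter q2).card) (Nat.sub_le _ _)
        rw [← this] at h2
        refine le_trans (le_of_eq ?_) h2
        refine Finset.sum_congr rfl fun T _ => ?_
        congr 1
        refine if_congr ?_ rfl rfl
        omega
      · rw [Finset.sum_eq_zero]
        · exact hB0
        · intro T _
          rw [if_neg (by omega), mul_zero]
    · intro T hT
      simp only [hS1 T hT, hS2 T hT, hc]
      simp
  · rw [Finset.sum_eq_zero]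
    · simp [hc]
    · intro T hT
      simp [hS1 T hT, hc]

lemma card_super {n k i : ℕ} (J : Finset (Fin n)) (hJ : J.card = i) (hik : i ≤ k) :
    ((kSets n k).filter (fun e => J ⊆ e)).card = (n - i).choose (k - i) := by
  have : (Finset.powersetCard (k - i) (Finset.univ \ J)).card = (n - i).choose (k - i) := by
    rw [Finset.card_powersetCard, Finset.card_sdiff_of_subset (Finset.subset_univ _), hJ]; simp
  rw [← this]
  refine Finset.card_bij' (fun e _ => e \ J) (fun e _ => e ∪ J) ?_ ?_ ?_ ?_
  · intro e he
    simp only [kSets, Finset.mem_filter, Finset.mem_powersetCard] at he ⊢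
    refine ⟨Finset.sdiff_subset_sdiff (Finset.subset_univ _) subset_rfl, ?_⟩
    rw [Finset.card_sdiff_of_subset he.2, he.1.2, hJ]
  · intro e he
    simp only [kSets, Finset.mem_filter, Finset.mem_powersetCard] at he ⊢
    refine ⟨⟨Finset.subset_univ _, ?_⟩, Finset.subset_union_right⟩
    have hd : Disjoint e J := Finset.disjoint_of_subset_left he.1 Finset.sdiff_disjoint
    rw [Finset.card_union_of_disjoint hd, he.2, hJ]; omega
  · intro e he
    simp only [kSets, Finset.mem_filter, Finset.mem_powersetCard] at he
    exact Finset.sdiff_union_of_subset he.2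
  · intro e he
    simp only [Finset.mem_powersetCard] at he
    have hd : Disjoint e J := Finset.disjoint_of_subset_left he.1 Finset.sdiff_disjoint
    rw [Finset.union_sdiff_right]
    exact Finset.sdiff_eq_self_of_disjoint hd

lemma card_both {n k j : ℕ} (J1 J2 : Finset (Fin n)) (h1 : J1.card = j) (h2 : J2.card = j)
    (hne : J1 ≠ J2) (hjk : j + 1 ≤ k) :
    (n - j).choose (k - j) ≤ ((kSets n k).filter (fun e => ¬ J1 ⊆ e ∧ J2 ⊆ e)).card +
      (n - j - 1).choose (k - j - 1) := by
  obtain ⟨x, hx1, hx2⟩ : ∃ x ∈ J1, x ∉ J2 := by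
    by_contra! h
    exact hne (Finset.eq_of_subset_of_card_le h (by omega))
  have hc : (insert x J2).card = j + 1 := by rw [Finset.card_insert_of_notMem hx2, h2]
  rw [Nat.sub_sub, Nat.sub_sub, ← card_super (insert x J2) hc hjk,
    ← card_super J2 h2 (by omega : j ≤ k)]
  refine le_trans (Finset.card_le_card ?_) (Finset.card_union_le _ _)
  intro e he
  simp only [Finset.mem_union, Finset.mem_filter] at he ⊢
  by_cases h : J1 ⊆ e
  · right
    exact ⟨he.1, Finset.insert_subset (h hx1) he.2⟩
  · left
    exact ⟨he.1, h, he.2⟩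

lemma choose_mono_aux (p : ℝ) (h0 : 0 ≤ p) (N s : ℕ) (hs : (s : ℝ) ≤ ((N - s : ℕ) : ℝ) * p)
    (d : ℕ) (hd : d ≤ s) :
    (N.choose (s - d) : ℝ) * p ^ (s - d) ≤ (N.choose s : ℝ) * p ^ s := by
  induction d with
  | zero => simp
  | succ d ih =>
    refine le_trans ?_ (ih (by omega))
    obtain ⟨t, ht⟩ : ∃ t, s - d = t + 1 := ⟨s - d - 1, by omega⟩
    rw [ht, show s - (d + 1) = t by omega]
    have key := Nat.choose_succ_right_eq N t
    have key' : (N.choose (t+1) : ℝ) * (t + 1) = N.choose t * ((N - t : ℕ) : ℝ) := by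
      exact_mod_cast key
    have ht1 : ((t:ℝ) + 1) ≤ ((N - t : ℕ) : ℝ) * p := by
      have a1 : ((t:ℝ) + 1) ≤ s := by exact_mod_cast (by omega : t + 1 ≤ s)
      have a2 : ((N - s : ℕ) : ℝ) ≤ ((N - t : ℕ) : ℝ) := by
        exact_mod_cast (by omega : N - s ≤ N - t)
      nlinarith
    have hpos : (0:ℝ) < t + 1 := by positivity
    rw [pow_succ]
    have : (N.choose t : ℝ) ≤ N.choose (t+1) * p := by
      have h3 : (N.choose t : ℝ) * (t + 1) ≤ (N.choose (t+1) * p) * (t+1) := by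
        calc (N.choose t : ℝ) * (t + 1) ≤ N.choose t * (((N - t : ℕ) : ℝ) * p) := by gcongr
          _ = (N.choose (t+1) * (t + 1)) * p := by rw [key']; ring
          _ = _ := by ring
      exact le_of_mul_le_mul_right h3 hpos
    have hp : 0 ≤ p ^ t := by positivity
    nlinarith

lemma bb_bound (p : ℝ) (h0 : 0 ≤ p) (h1 : p < 1) (N M m s t : ℕ)
    (hs : (s : ℝ) ≤ ((N - s : ℕ) : ℝ) * p) (hm : N ≤ m + M) (hmN : m ≤ N) (ht : t ≤ s) :
    bb p m t ≤ bb p N s / (1 - p) ^ M := by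
  have hq : 0 < 1 - p := by linarith
  rw [le_div_iff₀ (by positivity)]
  unfold bb
  have h2 := choose_mono_aux p h0 N s hs (s - t) (by omega)
  rw [show s - (s - t) = t by omega] at h2
  have h3 : (m.choose t : ℝ) ≤ N.choose t := by exact_mod_cast Nat.choose_le_choose t hmN
  have h4 : (1 - p) ^ (m - t) * (1 - p) ^ M ≤ (1 - p) ^ (N - s) := by
    rw [← pow_add]
    exact pow_le_pow_of_le_one hq.le (by linarith) (by omega)
  calc (m.choose t : ℝ) * (p ^ t * (1 - p) ^ (m - t)) * (1 - p) ^ M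
      = ((m.choose t : ℝ) * p ^ t) * ((1 - p) ^ (m - t) * (1 - p) ^ M) := by ring
    _ ≤ ((N.choose s : ℝ) * p ^ s) * (1 - p) ^ (N - s) := by
        refine mul_le_mul ?_ h4 (by positivity) (by positivity)
        refine le_trans ?_ h2
        gcongr
    _ = _ := by ring

lemma cheb {ι : Type*} (I : Finset ι) (w : ι → ℝ) (X : ι → ℕ) (hw : ∀ i ∈ I, 0 ≤ w i)
    (hsum : ∑ i ∈ I, w i = 1) (L V : ℝ) (hL : ∑ i ∈ I, w i * X i = L)
    (hV : ∑ i ∈ I, w i * (X i : ℝ) ^ 2 ≤ V) (K : ℕ) (hK : (K : ℝ) < L) :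
    1 - (V - L ^ 2) / (L - K) ^ 2 ≤ ∑ i ∈ I, (if K < X i then w i else 0) ∧
    ∑ i ∈ I, (if K < X i then w i else 0) ≤ 1 := by
  constructor
  · have hd : 0 < (L - K) ^ 2 := by
      have : 0 < L - K := by linarith
      positivity
    have h1 : ∀ i ∈ I, w i * (1 - ((X i : ℝ) - L) ^ 2 / (L - K) ^ 2) ≤
        if K < X i then w i else 0 := by
      intro i hi
      have := hw i hi
      split_ifs with h
      · have : 0 ≤ ((X i : ℝ) - L) ^ 2 / (L - K) ^ 2 := by positivity
        nlinarith
      · have hx : (X i : ℝ) ≤ K := by exact_mod_cast not_lt.mp h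
        have : 1 ≤ ((X i : ℝ) - L) ^ 2 / (L - K) ^ 2 := by
          rw [le_div_iff₀ hd]; nlinarith
        nlinarith
    refine le_trans ?_ (Finset.sum_le_sum h1)
    have : ∑ i ∈ I, w i * (1 - ((X i : ℝ) - L) ^ 2 / (L - K) ^ 2) =
        ∑ i ∈ I, w i - (∑ i ∈ I, w i * (X i : ℝ) ^ 2 - 2 * L * ∑ i ∈ I, w i * X i +
          L ^ 2 * ∑ i ∈ I, w i) / (L - K) ^ 2 := by
      rw [Finset.mul_sum, Finset.mul_sum, ← Finset.sum_sub_distrib, ← Finset.sum_add_distrib,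
        Finset.sum_div, ← Finset.sum_sub_distrib]
      refine Finset.sum_congr rfl fun i _ => ?_
      ring
    rw [this, hsum, hL]
    gcongr
    linarith
  · rw [← hsum]
    refine Finset.sum_le_sum fun i hi => ?_
    split_ifs
    · exact le_rfl
    · exact hw i hi

lemma main_fin (n k j s : ℕ) (hjk : j + 1 ≤ k) (p : ℝ) (h0 : 0 ≤ p) (h1 : p < 1)
    (hs : (s : ℝ) ≤ (((n - j).choose (k - j) - s : ℕ) : ℝ) * p) (K : ℕ) (L : ℝ)
    (hLdef : L = (n.choose j : ℝ) * bb p ((n - j).choose (k - j)) s) (hK : (K : ℝ) < L) :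
    1 - (L + L ^ 2 / (1 - p) ^ ((n - j - 1).choose (k - j - 1)) - L ^ 2) / (L - K) ^ 2 ≤
      binomProb n k p (fun H => K < numDegSets n j s H) ∧
    binomProb n k p (fun H => K < numDegSets n j s H) ≤ 1 := by
  set N := (n - j).choose (k - j) with hN
  set M := (n - j - 1).choose (k - j - 1) with hM
  set P := Finset.powersetCard j (Finset.univ : Finset (Fin n)) with hP
  have hPc : (P.card : ℝ) = n.choose j := by rw [hP, Finset.card_powersetCard]; simp
  have hq : 0 < 1 - p := by linarith
  have hX : ∀ H, (numDegSets n j s H : ℝ) =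
      ∑ J ∈ P, (if (H.filter (fun e => J ⊆ e)).card = s then (1:ℝ) else 0) := by
    intro H
    unfold numDegSets setDegree
    rw [Finset.card_filter]
    push_cast
    rfl
  have hmem : ∀ J ∈ P, J.card = j := fun J hJ => (Finset.mem_powersetCard.mp hJ).2
  have hdeg : ∀ J ∈ P, ∑ H ∈ (kSets n k).powerset, wt (kSets n k) p H *
      (if (H.filter (fun e => J ⊆ e)).card = s then (1:ℝ) else 0) = bb p N s := by
    intro J hJ
    rw [wt_deg, card_super J (hmem J hJ) (by omega)]
  have hbb : 0 ≤ bb p N s := by unfold bb; positivity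
  have hfin := cheb (kSets n k).powerset (wt (kSets n k) p) (numDegSets n j s)
    (fun H _ => wt_nonneg _ p h0 h1.le H) (wt_sum _ p) L (L + L ^ 2 / (1 - p) ^ M) ?_ ?_ K hK
  · have e : binomProb n k p (fun H => K < numDegSets n j s H) = ∑ i ∈ (kSets n k).powerset,
        (if K < numDegSets n j s i then wt (kSets n k) p i else 0) := by
      unfold binomProb wt
      refine Finset.sum_congr rfl fun H _ => ?_
      congr
    rw [e]
    exact hfin
  · simp only [hX, Finset.mul_sum]
    rw [Finset.sum_comm, Finset.sum_congr rfl hdeg, Finset.sum_const, nsmul_eq_mul, hPc, hLdef]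
  · have e : ∀ H, wt (kSets n k) p H * (numDegSets n j s H : ℝ) ^ 2 =
      ∑ J1 ∈ P, ∑ J2 ∈ P, wt (kSets n k) p H *
      ((if (H.filter (fun e => J1 ⊆ e)).card = s then (1:ℝ) else 0) *
       (if (H.filter (fun e => J2 ⊆ e)).card = s then (1:ℝ) else 0)) := by
      intro H
      rw [hX, sq, Finset.sum_mul_sum, Finset.mul_sum]
      simp only [Finset.mul_sum]
    simp only [e]
    rw [Finset.sum_comm]
    have hb : ∀ J1 ∈ P, ∀ J2 ∈ P, ∑ H ∈ (kSets n k).powerset, wt (kSets n k) p H *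
      ((if (H.filter (fun e => J1 ⊆ e)).card = s then (1:ℝ) else 0) *
       (if (H.filter (fun e => J2 ⊆ e)).card = s then (1:ℝ) else 0)) ≤
       (if J1 = J2 then bb p N s else 0) + bb p N s * (bb p N s / (1 - p) ^ M) := by
      intro J1 hJ1 J2 hJ2
      split_ifs with h
      · subst h
        have : 0 ≤ bb p N s * (bb p N s / (1 - p) ^ M) := by positivity
        refine le_trans (le_of_eq ?_) (le_add_of_nonneg_right this)
        rw [← hdeg J1 hJ1]
        refine Finset.sum_congr rfl fun H _ => ?_
        split_ifs <;> simp
      · rw [zero_add]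
        have := wt_joint (kSets n k) p h0 h1.le (fun e => J1 ⊆ e) (fun e => J2 ⊆ e) s
          (bb p N s / (1 - p) ^ M) (fun t ht => bb_bound p h0 h1 N M _ s t hs
            (card_both J1 J2 (hmem _ hJ1) (hmem _ hJ2) h hjk)
            (by
              rw [hN, ← card_super J2 (hmem _ hJ2) (by omega : j ≤ k)]
              refine Finset.card_le_card ?_
              intro e he
              simp only [Finset.mem_filter] at he ⊢
              exact ⟨he.1, he.2.2⟩) ht)
        rw [card_super J1 (hmem _ hJ1) (by omega)] at this
        exact this
    calc _ ≤ ∑ J1 ∈ P, ∑ J2 ∈ P, ((if J1 = J2 then bb p N s else 0) +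
          bb p N s * (bb p N s / (1 - p) ^ M)) := by
          refine Finset.sum_le_sum fun J1 hJ1 => ?_
          rw [Finset.sum_comm]
          exact Finset.sum_le_sum fun J2 hJ2 => hb J1 hJ1 J2 hJ2
      _ = L + L ^ 2 / (1 - p) ^ M := by
          simp only [Finset.sum_add_distrib, Finset.sum_ite_eq, Finset.sum_const, nsmul_eq_mul]
          rw [Finset.sum_congr rfl (g := fun _ => bb p N s) (fun J hJ => if_pos hJ)]
          simp only [Finset.sum_const, nsmul_eq_mul]
          rw [hPc, hLdef]
          ring

lemma exp_le_one_sub (p : ℝ) (h0 : 0 ≤ p) (h1 : p ≤ 1 / 2) :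
    Real.exp (-(p + 2 * p ^ 2)) ≤ 1 - p := by
  have hq : 0 < 1 - p := by linarith
  have h2 := Real.add_one_le_exp (p / (1 - p))
  have h3 : p / (1 - p) + 1 = (1 - p)⁻¹ := by field_simp; ring
  have h4 : p / (1 - p) ≤ p + 2 * p ^ 2 := by
    rw [div_le_iff₀ hq]
    nlinarith [mul_nonneg h0 h0]
  rw [Real.exp_neg]
  rw [h3] at h2
  rw [inv_le_comm₀ (Real.exp_pos _) hq]
  exact h2.trans (Real.exp_le_exp.mpr h4)

lemma choose_lower (n r : ℕ) (h : 2 * r ≤ n) :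
    ((n : ℝ) / 2) ^ r / r.factorial ≤ n.choose r := by
  refine le_trans ?_ (Nat.pow_le_choose r n)
  gcongr
  have : n ≤ 2 * (n + 1 - r) := by omega
  have : (n : ℝ) ≤ 2 * ((n + 1 - r : ℕ) : ℝ) := by exact_mod_cast this
  linarith

lemma choose_ratio (n j r : ℕ) (h : 2 * (j + r) ≤ n) :
    (n.choose r : ℝ) ≤ 2 ^ r * ((n - j).choose r : ℝ) := by
  have h1 : (n.choose r : ℝ) ≤ (n : ℝ) ^ r / r.factorial := Nat.choose_le_pow_div r n
  have h2 : (((n - j + 1 - r : ℕ) : ℝ)) ^ r / r.factorial ≤ (n - j).choose r :=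
    Nat.pow_le_choose r (n - j)
  have h3 : (n : ℝ) ≤ 2 * ((n - j + 1 - r : ℕ) : ℝ) := by
    exact_mod_cast (by omega : n ≤ 2 * (n - j + 1 - r))
  calc (n.choose r : ℝ) ≤ (n : ℝ) ^ r / r.factorial := h1
    _ ≤ (2 * ((n - j + 1 - r : ℕ) : ℝ)) ^ r / r.factorial := by gcongr
    _ = 2 ^ r * ((((n - j + 1 - r : ℕ) : ℝ)) ^ r / r.factorial) := by rw [mul_pow]; ring
    _ ≤ _ := by gcongr

lemma choose_M (n j r : ℕ) (hn : 1 ≤ n) (hr : 1 ≤ r) :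
    ((n - j - 1).choose (r - 1) : ℝ) * n ≤ r * n.choose r := by
  obtain ⟨n, rfl⟩ : ∃ m, n = m + 1 := ⟨n - 1, by omega⟩
  obtain ⟨r, rfl⟩ : ∃ m, r = m + 1 := ⟨r - 1, by omega⟩
  have h1 : (n + 1 - j - 1).choose r ≤ n.choose r := Nat.choose_le_choose r (by omega)
  have h2 := Nat.add_one_mul_choose_eq n r
  have : (n + 1 - j - 1).choose r * (n + 1) ≤ (r + 1) * (n + 1).choose (r + 1) := by
    nlinarith
  simp only [Nat.add_sub_cancel]
  exact_mod_cast this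

/-- deterministic estimates for a single `n` -/
lemma lower_L (n k j s : ℕ) (hjk : j + 1 ≤ k) (lam p ℓ c : ℝ) (hn : 2 * (j + (k - j)) ≤ n)
    (hn1 : 1 ≤ n)
    (hℓ : ℓ = Real.log n) (hℓ1 : 1 ≤ ℓ)
    (hlam : lam = j * ℓ + s * Real.log ℓ + c)
    (hlam1 : ℓ / 2 ≤ lam)
    (hp : p = lam / (n.choose (k - j) : ℝ))
    (hbig : 2 * s ≤ (n - j).choose (k - j))
    (hG1 : lam ^ 2 ≤ n.choose (k - j)) (hG2 : 2 * lam ≤ n.choose (k - j)) :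
    0 ≤ p ∧ p ≤ 1 / 2 ∧ ℓ / 2 ^ (k - j + 2) ≤ (((n - j).choose (k - j) - s : ℕ) : ℝ) * p ∧
    (1 / 2 : ℝ) ^ j / j.factorial * ((1 / 2 ^ (k - j + 2)) ^ s / s.factorial) * Real.exp (-2 - c) ≤
      (n.choose j : ℝ) * bb p ((n - j).choose (k - j)) s := by
  set G := n.choose (k - j) with hG
  set N := (n - j).choose (k - j) with hN
  have hlampos : 0 < lam := by linarith
  have hGpos : (0 : ℝ) < G := by linarith
  have hp0 : 0 ≤ p := by rw [hp]; positivity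
  have hp1 : p ≤ 1 / 2 := by
    rw [hp, div_le_iff₀ hGpos]; linarith
  have hGp : (G : ℝ) * p = lam := by rw [hp]; field_simp
  have hratio : (G : ℝ) ≤ 2 ^ (k - j) * N := choose_ratio n j (k - j) hn
  have hNs : (N : ℝ) ≤ 2 * ((N - s : ℕ) : ℝ) := by
    exact_mod_cast (by omega : N ≤ 2 * (N - s))
  have h3 : ℓ / 2 ^ (k - j + 2) ≤ ((N - s : ℕ) : ℝ) * p := by
    rw [div_le_iff₀ (by positivity), pow_add]
    have : (G : ℝ) * p ≤ 2 ^ (k - j) * (2 * ((N - s : ℕ) : ℝ)) * p := by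
      gcongr
      exact hratio.trans (by gcongr)
    rw [hGp] at this
    linarith
  refine ⟨hp0, hp1, h3, ?_⟩
  have hnpos : (0 : ℝ) < n := by exact_mod_cast hn1
  have hC : ((n : ℝ) / 2) ^ j / j.factorial ≤ n.choose j := choose_lower n j (by omega)
  have hNC : (ℓ / 2 ^ (k - j + 2)) ^ s / s.factorial ≤ (N.choose s : ℝ) * p ^ s := by
    have h4 : (((N + 1 - s : ℕ) : ℝ)) ^ s / s.factorial ≤ N.choose s := Nat.pow_le_choose s N
    have h5 : ((N - s : ℕ) : ℝ) ≤ ((N + 1 - s : ℕ) : ℝ) := by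
      exact_mod_cast (by omega : N - s ≤ N + 1 - s)
    calc (ℓ / 2 ^ (k - j + 2)) ^ s / s.factorial
        ≤ (((N - s : ℕ) : ℝ) * p) ^ s / s.factorial := by gcongr
      _ ≤ (((N + 1 - s : ℕ) : ℝ) * p) ^ s / s.factorial := by gcongr
      _ = (((N + 1 - s : ℕ) : ℝ)) ^ s / s.factorial * p ^ s := by rw [mul_pow]; ring
      _ ≤ _ := by gcongr
  have hexp : Real.exp (-2 - lam) ≤ (1 - p) ^ (N - s) := by
    have hNG : N - s ≤ G := (Nat.sub_le _ _).trans (Nat.choose_le_choose _ (Nat.sub_le _ _))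
    calc Real.exp (-2 - lam) ≤ Real.exp (G * (-(p + 2 * p ^ 2))) := by
          apply Real.exp_le_exp.mpr
          have : lam * p ≤ 1 := by
            rw [hp, mul_div_assoc', div_le_one hGpos]; nlinarith
          nlinarith
      _ = Real.exp (-(p + 2 * p ^ 2)) ^ G := by rw [Real.exp_nat_mul]
      _ ≤ (1 - p) ^ G := by
          gcongr
          exact exp_le_one_sub p hp0 hp1
      _ ≤ _ := pow_le_pow_of_le_one (by linarith) (by linarith) hNG
  have he1 : Real.exp (j * ℓ) = (n : ℝ) ^ j := by
    rw [Real.exp_nat_mul, hℓ, Real.exp_log hnpos]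
  have he2 : Real.exp (s * Real.log ℓ) = ℓ ^ s := by
    rw [Real.exp_nat_mul, Real.exp_log (by linarith)]
  have he : Real.exp (-2 - c) = (n : ℝ) ^ j * ℓ ^ s * Real.exp (-2 - lam) := by
    rw [← he1, ← he2, ← Real.exp_add, ← Real.exp_add]
    congr 1
    rw [hlam]; ring
  calc _ = (((n : ℝ) / 2) ^ j / j.factorial) *
        (((ℓ / 2 ^ (k - j + 2)) ^ s / s.factorial) * Real.exp (-2 - lam)) := by
        rw [he]; simp only [div_pow, one_pow]; ring
    _ ≤ (n.choose j : ℝ) * (((N.choose s : ℝ) * p ^ s) * (1 - p) ^ (N - s)) := by gcongr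
    _ = _ := by unfold bb; ring

lemma final_lim (L δ : ℕ → ℝ) (K : ℝ) (hL : Tendsto L atTop atTop)
    (hδ : Tendsto δ atTop (nhds 1)) :
    Tendsto (fun n => 1 - (L n + L n ^ 2 / δ n - L n ^ 2) / (L n - K) ^ 2) atTop (nhds 1) := by
  have hinv : Tendsto (fun n => (L n)⁻¹) atTop (nhds 0) := tendsto_inv_atTop_zero.comp hL
  have h : Tendsto (fun n => 1 - ((L n)⁻¹ + (δ n)⁻¹ - 1) / (1 - K * (L n)⁻¹) ^ 2) atTop
      (nhds (1 - (0 + 1⁻¹ - 1) / (1 - K * 0) ^ 2)) := by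
    refine tendsto_const_nhds.sub (Tendsto.div ?_ ?_ (by simp))
    · exact (hinv.add (hδ.inv₀ one_ne_zero)).sub tendsto_const_nhds
    · exact (tendsto_const_nhds.sub (hinv.const_mul K)).pow 2
  have e : (1 - (0 + 1⁻¹ - 1) / (1 - K * 0) ^ 2 : ℝ) = 1 := by norm_num
  rw [e] at h
  refine h.congr' ?_
  filter_upwards [hL.eventually_gt_atTop (max K 0)] with n hn
  have h1 : 0 < L n := lt_of_le_of_lt (le_max_right _ _) hn
  have h2 : L n - K ≠ 0 := by
    have := lt_of_le_of_lt (le_max_left K 0) hn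
    linarith
  congr 1
  have h3 : 1 - K * (L n)⁻¹ = (L n - K) / L n := by field_simp
  rw [h3]
  field_simp

/-- **Theorem 2(iii).** For `k ≥ 3`, `1 ≤ j ≤ k-1`, a fixed integer `s ≥ 0`, and
`p = (j log n + s log log n + c_n)/C(n,k-j)` with `c_n = o(log n)` and `c_n → -∞`,
`D_s → ∞` with high probability: for every constant `K`, `Pr(D_s > K) → 1`. -/
theorem many_degree_s_sets (k j s : ℕ) (hk : 3 ≤ k) (hj : 1 ≤ j) (hjk : j ≤ k - 1)
    (p c : ℕ → ℝ)
    (hc : c =o[atTop] fun n : ℕ => Real.log n)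
    (hcinf : Tendsto c atTop atBot)
    (hp : ∀ n : ℕ, p n =
      ((j : ℝ) * Real.log n + (s : ℝ) * Real.log (Real.log n) + c n) /
        (n.choose (k - j) : ℝ)) :
    ∀ K : ℕ,
      Tendsto (fun n : ℕ => binomProb n k (p n) (fun H => K < numDegSets n j s H)) atTop
        (nhds 1) := by
  intro K
  have hr : 1 ≤ k - j := by omega
  have hjk' : j + 1 ≤ k := by omega
  set r := k - j with hrdef
  have hlogR : Tendsto (fun n : ℕ => Real.log n) atTop atTop :=
    Real.tendsto_log_atTop.comp tendsto_natCast_atTop_atTop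
  set lam : ℕ → ℝ := fun n => (j : ℝ) * Real.log n + (s : ℝ) * Real.log (Real.log n) + c n
    with hlam
  set C : ℝ := (j : ℝ) + s + 1 with hC
  have hCpos : 0 < C := by positivity
  -- bounds on lam
  have hb : ∀ᶠ n : ℕ in atTop, Real.log n / 2 ≤ lam n ∧ lam n ≤ C * Real.log n := by
    filter_upwards [hc.bound (show (0:ℝ) < 1 / 2 by norm_num),
      hlogR.eventually_ge_atTop 1] with n h1 h2
    rw [Real.norm_eq_abs, Real.norm_eq_abs, abs_of_nonneg (by linarith : 0 ≤ Real.log n)] at h1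
    have h3 := abs_le.mp h1
    have h4 : 0 ≤ Real.log (Real.log n) := Real.log_nonneg h2
    have h5 : Real.log (Real.log n) ≤ Real.log n := by
      have := Real.log_le_sub_one_of_pos (by linarith : 0 < Real.log n)
      linarith
    have hj' : (1 : ℝ) ≤ j := by exact_mod_cast hj
    have hs' : (0 : ℝ) ≤ s := by positivity
    have h6 : (s : ℝ) * Real.log (Real.log n) ≤ s * Real.log n := by gcongr
    have h7 : 0 ≤ (s : ℝ) * Real.log (Real.log n) := by positivity
    simp only [hlam, hC]
    constructor <;> nlinarith
  -- log^2 n / n → 0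
  have hlo : ∀ i : ℕ, Tendsto (fun n : ℕ => Real.log n ^ i / (n : ℝ)) atTop (nhds 0) := by
    intro i
    have := (Real.isLittleO_pow_log_id_atTop (n := i)).tendsto_div_nhds_zero
    exact this.comp tendsto_natCast_atTop_atTop
  have hGlow : ∀ᶠ n : ℕ in atTop, (n : ℝ) / (2 * r.factorial) ≤ n.choose r := by
    filter_upwards [eventually_ge_atTop (2 * r)] with n hn
    refine le_trans ?_ (choose_lower n r hn)
    have h1 : (1 : ℝ) ≤ (n : ℝ) / 2 := by
      have : (2 : ℝ) ≤ n := by exact_mod_cast (by omega : 2 ≤ n)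
      linarith
    have := le_self_pow₀ h1 (by omega : r ≠ 0)
    rw [← div_div]
    gcongr
  have hev : ∀ (A : ℝ) (i : ℕ), 0 < A →
      ∀ᶠ n : ℕ in atTop, A * Real.log n ^ i ≤ (n.choose r : ℝ) := by
    intro A i hA
    have hε : (0:ℝ) < 1 / (A * (2 * r.factorial)) := by positivity
    filter_upwards [hGlow, (hlo i).eventually_lt_const hε, eventually_gt_atTop 0] with n h1 h2 h3
    refine le_trans ?_ h1
    have hn : (0:ℝ) < n := by exact_mod_cast h3
    rw [div_lt_div_iff₀ hn (by positivity)] at h2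
    rw [le_div_iff₀ (by positivity)]
    linarith
  have hG1 : ∀ᶠ n : ℕ in atTop, lam n ^ 2 ≤ n.choose r := by
    filter_upwards [hb, hev (C ^ 2) 2 (by positivity), hlogR.eventually_ge_atTop 1] with n h1 h2 h3
    refine le_trans ?_ h2
    rw [← mul_pow]
    have : 0 ≤ lam n := by linarith [h1.1]
    gcongr
    exact h1.2
  have hG2 : ∀ᶠ n : ℕ in atTop, 2 * lam n ≤ n.choose r := by
    filter_upwards [hb, hev (2 * C) 1 (by positivity)] with n h1 h2
    linarith [h1.2]
  have hNbig : ∀ᶠ n : ℕ in atTop, 2 * s ≤ (n - j).choose r := by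
    filter_upwards [hlogR.eventually_ge_atTop 1, hev (2 ^ r * (2 * s + 1)) 1 (by positivity),
      eventually_ge_atTop (2 * (j + r))] with n h1 h2 h3
    have h4 := h2.trans (choose_ratio n j r h3)
    rw [pow_one, mul_assoc] at h4
    have h5 := le_of_mul_le_mul_left h4 (by positivity)
    have h6 : (2 * s : ℝ) ≤ (n - j).choose r := by
      have : (0:ℝ) ≤ s := by positivity
      nlinarith
    exact_mod_cast h6
  have hest : ∀ᶠ n : ℕ in atTop, 0 ≤ p n ∧ p n ≤ 1 / 2 ∧
      Real.log n / 2 ^ (r + 2) ≤ (((n - j).choose r - s : ℕ) : ℝ) * p n ∧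
    (1 / 2 : ℝ) ^ j / j.factorial * ((1 / 2 ^ (r + 2)) ^ s / s.factorial) *
      Real.exp (-2 - c n) ≤ (n.choose j : ℝ) * bb (p n) ((n - j).choose r) s := by
    filter_upwards [hb, hG1, hG2, hNbig, hlogR.eventually_ge_atTop 1,
      eventually_ge_atTop (2 * (j + r)), eventually_ge_atTop 1] with n h1 h2 h3 h4 h5 h6 h7
    exact lower_L n k j s hjk' (lam n) (p n) (Real.log n) (c n) h6 h7 rfl h5 rfl h1.1 (hp n) h4 h2 h3
  set L : ℕ → ℝ := fun n => (n.choose j : ℝ) * bb (p n) ((n - j).choose r) s with hL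
  have hLinf : Tendsto L atTop atTop := by
    refine tendsto_atTop_mono' atTop (hest.mono fun n h => h.2.2.2) ?_
    refine Tendsto.const_mul_atTop (by positivity) ?_
    refine Real.tendsto_exp_atTop.comp ?_
    have : Tendsto (fun n => -2 + -c n) atTop atTop :=
      tendsto_atTop_add_const_left _ _ (tendsto_neg_atBot_atTop.comp hcinf)
    simpa [sub_eq_add_neg] using this
  set δ : ℕ → ℝ := fun n => (1 - p n) ^ ((n - j - 1).choose (r - 1)) with hδ
  have hδ1 : Tendsto δ atTop (nhds 1) := by
    have hlow : Tendsto (fun n : ℕ => 1 - (r * C) * (Real.log n ^ 1 / (n : ℝ))) atTop (nhds 1) := by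
      have := (tendsto_const_nhds (x := (1:ℝ))).sub ((hlo 1).const_mul (r * C))
      simpa using this
    refine tendsto_of_tendsto_of_tendsto_of_le_of_le' hlow tendsto_const_nhds ?_ ?_
    · filter_upwards [hest, hb, eventually_ge_atTop 1, hlogR.eventually_ge_atTop 1, hG2]
        with n h1 h2 h3 h4 h5
      have h6 := one_add_mul_le_pow (by linarith [h1.2.1] : -2 ≤ -p n) ((n - j - 1).choose (r - 1))
      have h7 := choose_M n j r h3 hr
      have hn : (0:ℝ) < n := by exact_mod_cast h3
      have hGpos : (0:ℝ) < n.choose r := by linarith [h2.1]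
      have hpG : (n.choose r : ℝ) * p n = lam n := by
        rw [hp n]; field_simp; rfl
      have h8 : (((n - j - 1).choose (r - 1) : ℕ) : ℝ) * p n ≤
          (r * C) * (Real.log n ^ 1 / (n : ℝ)) := by
        rw [mul_div_assoc', le_div_iff₀ hn, pow_one]
        calc _ = (((n - j - 1).choose (r - 1) : ℕ) : ℝ) * n * p n := by ring
          _ ≤ r * n.choose r * p n := mul_le_mul_of_nonneg_right h7 h1.1
          _ = r * lam n := by rw [mul_assoc, hpG]
          _ ≤ r * (C * Real.log n) := by
            gcongr
            exact h2.2
          _ = _ := by ring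
      simp only [hδ, sub_eq_add_neg] at h6 ⊢
      linarith
    · filter_upwards [hest] with n h1
      exact pow_le_one₀ (by linarith [h1.2.1]) (by linarith [h1.1])
  have hmain : ∀ᶠ n : ℕ in atTop,
      1 - (L n + L n ^ 2 / δ n - L n ^ 2) / (L n - K) ^ 2 ≤
        binomProb n k (p n) (fun H => K < numDegSets n j s H) ∧
      binomProb n k (p n) (fun H => K < numDegSets n j s H) ≤ 1 := by
    filter_upwards [hest, hLinf.eventually_gt_atTop (K : ℝ),
      hlogR.eventually_ge_atTop ((s : ℝ) * 2 ^ (r + 2))] with n h1 h2 h3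
    refine main_fin n k j s hjk' (p n) h1.1 (by linarith [h1.2.1]) ?_ K (L n) rfl h2
    refine le_trans ?_ h1.2.2.1
    rw [le_div_iff₀ (by positivity)]
    exact h3
  exact tendsto_of_tendsto_of_tendsto_of_le_of_le' (final_lim L δ K hLinf hδ1) tendsto_const_nhds
    (hmain.mono fun n h => h.1) (hmain.mono fun n h => h.2)

end
end

section
/- Let k ≥ 3 and 1 ≤ j ≤ k−1 be integers and let p = (j·log n + c_n)/C(n,k−j). If c_n → ∞, then with high probability H^k(n,p) is j-connected, and in particular contains no isolated j-set. -/
open Filter Asymptotics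

open scoped Classical

noncomputable section

theorem aux_total (n k : ℕ) (p : ℝ) :
    ∑ H ∈ (kSets n k).powerset, p ^ H.card * (1 - p) ^ ((kSets n k).card - H.card) = 1 := by
  rw [Finset.sum_pow_mul_eq_add_pow]; simp

theorem aux_avoid (n k : ℕ) (p : ℝ) (A : Finset (Finset (Fin n))) (hA : A ⊆ kSets n k) :
    binomProb n k p (fun H => Disjoint H A) = (1 - p) ^ A.card := by
  unfold binomProb
  beta_reduce
  have hiff : ∀ H, H ∈ (kSets n k \ A).powerset ↔ H ⊆ kSets n k ∧ Disjoint H A := by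
    intro H
    simp only [Finset.mem_powerset, Finset.subset_sdiff]
  have hsub : (kSets n k \ A).powerset ⊆ (kSets n k).powerset :=
    Finset.powerset_mono.2 Finset.sdiff_subset
  refine (Finset.sum_subset hsub ?_).symm.trans ?_
  · intro H hH hn
    exact if_neg fun hd => hn ((hiff H).2 ⟨Finset.mem_powerset.1 hH, hd⟩)
  refine (Finset.sum_congr rfl (g := fun H : Finset (Finset (Fin n)) =>
    p ^ H.card * (1 - p) ^ ((kSets n k).card - H.card)) ?_).trans ?_
  · intro H hH
    exact if_pos ((hiff H).1 hH).2
  have hc : (kSets n k \ A).card + A.card = (kSets n k).card :=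
    Finset.card_sdiff_add_card_eq_card hA
  have h2 : ∀ H ∈ (kSets n k \ A).powerset,
      p ^ H.card * (1 - p) ^ ((kSets n k).card - H.card) =
      (1 - p) ^ A.card * (p ^ H.card * (1 - p) ^ ((kSets n k \ A).card - H.card)) := by
    intro H hH
    have := Finset.card_le_card (Finset.mem_powerset.1 hH)
    have e : (kSets n k).card - H.card = A.card + ((kSets n k \ A).card - H.card) := by omega
    rw [e, pow_add]; ring
  rw [Finset.sum_congr rfl h2, ← Finset.mul_sum, Finset.sum_pow_mul_eq_add_pow]
  simp

theorem aux_weight_nonneg (n k : ℕ) (p : ℝ) (h0 : 0 ≤ p) (h1 : p ≤ 1)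
    (H : Finset (Finset (Fin n))) :
    0 ≤ p ^ H.card * (1 - p) ^ ((kSets n k).card - H.card) :=
  mul_nonneg (pow_nonneg h0 _) (pow_nonneg (by linarith) _)

theorem aux_le_one (n k : ℕ) (p : ℝ) (h0 : 0 ≤ p) (h1 : p ≤ 1)
    (Q : Finset (Finset (Fin n)) → Prop) : binomProb n k p Q ≤ 1 := by
  rw [← aux_total n k p]
  unfold binomProb
  refine Finset.sum_le_sum fun H _ => ?_
  split_ifs
  · exact le_rfl
  · exact aux_weight_nonneg n k p h0 h1 H

theorem aux_union (n k : ℕ) (p : ℝ) (h0 : 0 ≤ p) (h1 : p ≤ 1) {ι : Type*} (T : Finset ι)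
    (Q : Finset (Finset (Fin n)) → Prop) (B : ι → Finset (Finset (Fin n)) → Prop)
    (h : ∀ H, H ⊆ kSets n k → ¬ Q H → ∃ i ∈ T, B i H) :
    1 - ∑ i ∈ T, binomProb n k p (B i) ≤ binomProb n k p Q := by
  rw [sub_le_iff_le_add, ← aux_total n k p]
  unfold binomProb
  rw [Finset.sum_comm, ← Finset.sum_add_distrib]
  refine Finset.sum_le_sum fun H hH => ?_
  have hw := aux_weight_nonneg n k p h0 h1 H
  have hnn : ∀ i ∈ T, 0 ≤ (if B i H then p ^ H.card * (1 - p) ^ ((kSets n k).card - H.card)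
      else 0) := by
    intro i _
    split_ifs
    · exact hw
    · exact le_rfl
  by_cases hQ : Q H
  · rw [if_pos hQ]
    have := Finset.sum_nonneg hnn
    linarith
  · rw [if_neg hQ]
    obtain ⟨i, hi, hB⟩ := h H (Finset.mem_powerset.1 hH) hQ
    have := Finset.single_le_sum hnn hi
    rw [if_pos hB] at this
    linarith

/-- The `k`-sets containing `I` and meeting `S` in exactly one vertex. -/
def crossSets (n k : ℕ) (I S : Finset (Fin n)) : Finset (Finset (Fin n)) :=
  (kSets n k).filter (fun e => I ⊆ e ∧ (e ∩ S).card = 1)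

theorem aux_cross_card (n k j : ℕ) (hj : 1 ≤ j) (hjk : j ≤ k - 1) (I S : Finset (Fin n))
    (hI : I.card = j - 1) (hd : Disjoint I S) :
    S.card * (n - (j - 1) - S.card).choose (k - j) ≤ (crossSets n k I S).card := by
  have hc : (Finset.univ \ (I ∪ S)).card = n - (j - 1) - S.card := by
    rw [Finset.card_sdiff_of_subset (Finset.subset_univ _), Finset.card_union_of_disjoint hd, hI]
    simp; omega
  rw [← hc, ← Finset.card_powersetCard, ← Finset.card_product]
  have key : ∀ x ∈ S, ∀ R ⊆ Finset.univ \ (I ∪ S), insert x (I ∪ R) ∩ S = {x} ∧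
      insert x (I ∪ R) \ (I ∪ S) = R := by
    intro x hx R hR
    have hR' : ∀ y ∈ R, y ∉ I ∧ y ∉ S := by
      intro y hy
      have := hR hy
      simpa using this
    have hIS : ∀ y ∈ I, y ∉ S := fun y hy hs => Finset.disjoint_left.1 hd hy hs
    constructor
    · ext y
      simp only [Finset.mem_inter, Finset.mem_insert, Finset.mem_union, Finset.mem_singleton]
      constructor
      · rintro ⟨h | h | h, hs⟩
        · exact h
        · exact absurd hs (hIS y h)
        · exact absurd hs (hR' y h).2
      · rintro rfl
        exact ⟨Or.inl rfl, hx⟩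
    · ext y
      simp only [Finset.mem_sdiff, Finset.mem_insert, Finset.mem_union]
      constructor
      · rintro ⟨h | h | h, hs⟩
        · subst h; exact absurd (Or.inr hx) hs
        · exact absurd (Or.inl h) hs
        · exact h
      · intro h
        have := hR' y h
        exact ⟨Or.inr (Or.inr h), by tauto⟩
  refine Finset.card_le_card_of_injOn (fun q => insert q.1 (I ∪ q.2)) ?_ ?_
  · rintro ⟨x, R⟩ hq
    simp only [Finset.coe_product, Set.mem_prod, Finset.mem_coe, Finset.mem_powersetCard] at hq
    obtain ⟨hx, hR, hRc⟩ := hq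
    have hk := key x hx R hR
    simp only [crossSets, kSets, Finset.mem_coe, Finset.mem_filter, Finset.mem_powersetCard]
    refine ⟨⟨Finset.subset_univ _, ?_⟩, ?_, ?_⟩
    · have hdR : Disjoint I R := by
        rw [Finset.disjoint_left]
        intro y hy hyR
        have := hR hyR
        simp [hy] at this
      have hxn : x ∉ I ∪ R := by
        rw [Finset.mem_union]
        rintro (h | h)
        · exact Finset.disjoint_left.1 hd h hx
        · have := hR h
          simp [hx] at this
      rw [Finset.card_insert_of_notMem hxn, Finset.card_union_of_disjoint hdR, hI, hRc]
      omega
    · exact Finset.subset_union_left.trans (Finset.subset_insert _ _)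
    · rw [hk.1]; simp
  · rintro ⟨x, R⟩ hq ⟨x', R'⟩ hq' heq
    simp only [Finset.coe_product, Set.mem_prod, Finset.mem_coe, Finset.mem_powersetCard] at hq hq'
    have h1 := key x hq.1 R hq.2.1
    have h2 := key x' hq'.1 R' hq'.2.1
    simp only at heq
    rw [heq] at h1
    have e1 : x = x' := Finset.singleton_injective (h1.1.symm.trans h2.1)
    have e2 : R = R' := h1.2.symm.trans h2.2
    rw [e1, e2]

theorem JConn.symm' {n j : ℕ} {H : Finset (Finset (Fin n))} {A B : Finset (Fin n)}
    (h : JConn j H A B) : JConn j H B A := by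
  obtain ⟨e1, h1, e2, h2, hA, hB, hr⟩ := h
  refine ⟨e2, h2, e1, h1, hB, hA, ?_⟩
  have hsym : ∀ e f : Finset (Fin n), (e ∈ H ∧ f ∈ H ∧ j ≤ (e ∩ f).card) →
      (f ∈ H ∧ e ∈ H ∧ j ≤ (f ∩ e).card) := by
    rintro e f ⟨he, hf, hc⟩
    exact ⟨hf, he, by rwa [Finset.inter_comm]⟩
  clear hA hB h1 h2
  induction hr with
  | refl => exact Relation.ReflTransGen.refl
  | tail _ hbc ih => exact Relation.ReflTransGen.head (hsym _ _ hbc) ih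

theorem JConn.trans' {n j : ℕ} {H : Finset (Finset (Fin n))} {A B C : Finset (Fin n)}
    (hBj : B.card = j) (h : JConn j H A B) (h' : JConn j H B C) : JConn j H A C := by
  obtain ⟨e1, h1, e2, h2, hA, hB, hr⟩ := h
  obtain ⟨f1, g1, f2, g2, hB', hC, hr'⟩ := h'
  refine ⟨e1, h1, f2, g2, hA, hC, ?_⟩
  refine (hr.tail ⟨h2, g1, ?_⟩).trans hr'
  rw [← hBj]
  exact Finset.card_le_card (Finset.subset_inter hB hB')

theorem aux_det (n k j : ℕ) (hj : 1 ≤ j) (hjk : j ≤ k - 1) (hn : k ≤ n)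
    (H : Finset (Finset (Fin n))) (hH : H ⊆ kSets n k)
    (h : ∀ I S : Finset (Fin n), I.card = j - 1 → Disjoint I S → 1 ≤ S.card → 2 * S.card ≤ n →
      ¬ Disjoint H (crossSets n k I S)) :
    JConnectedHG n j H ∧ ∀ J : Finset (Fin n), J.card = j → ¬ IsIsolatedSet H J := by
  have h' : ∀ I S : Finset (Fin n), I.card = j - 1 → Disjoint I S → 1 ≤ S.card →
      2 * S.card ≤ n → ∃ e ∈ H, I ⊆ e ∧ e.card = k ∧ (e ∩ S).card = 1 := by
    intro I S h1 h2 h3 h4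
    have := h I S h1 h2 h3 h4
    rw [Finset.not_disjoint_iff] at this
    obtain ⟨e, he, hc⟩ := this
    simp only [crossSets, kSets, Finset.mem_filter, Finset.mem_powersetCard] at hc
    exact ⟨e, he, hc.2.1, hc.1.2, hc.2.2⟩
  have hrefl : ∀ J : Finset (Fin n), J.card = j → JConn j H J J := by
    intro J hJ
    obtain ⟨x, hx⟩ := Finset.card_pos.1 (by omega : 0 < J.card)
    obtain ⟨e, he, hI, -, hc⟩ := h' (J.erase x) {x} (by rw [Finset.card_erase_of_mem hx, hJ])
      (by simp) (by simp) (by simp; omega)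
    have hxe : x ∈ e := by
      obtain ⟨y, hy⟩ := Finset.card_pos.1 (by omega : 0 < (e ∩ {x}).card)
      simp only [Finset.mem_inter, Finset.mem_singleton] at hy
      rw [← hy.2]; exact hy.1
    have hJe : J ⊆ e := by
      rw [← Finset.insert_erase hx]
      exact Finset.insert_subset hxe hI
    exact ⟨e, he, e, he, hJe, hJe, Relation.ReflTransGen.refl⟩
  have hcard : ∀ I : Finset (Fin n), I.card = j - 1 → ∀ x, x ∉ I → (insert x I).card = j := by
    intro I hI x hx
    rw [Finset.card_insert_of_notMem hx, hI]; omega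
  -- a class that is at most half of the vertices cannot exist
  have hbig : ∀ I : Finset (Fin n), I.card = j - 1 → ∀ x, x ∉ I →
      n < 2 * (Finset.univ.filter (fun z => z ∉ I ∧ JConn j H (insert x I) (insert z I))).card ∨
        ∀ y, y ∉ I → JConn j H (insert x I) (insert y I) := by
    intro I hI x hx
    by_contra hcon
    push Not at hcon
    obtain ⟨hsm, -⟩ := hcon
    set S := Finset.univ.filter (fun z => z ∉ I ∧ JConn j H (insert x I) (insert z I)) with hS
    have hmem : ∀ z, z ∈ S ↔ z ∉ I ∧ JConn j H (insert x I) (insert z I) := by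
      intro z; simp [hS]
    have hxS : x ∈ S := (hmem x).2 ⟨hx, hrefl _ (hcard I hI x hx)⟩
    have hdis : Disjoint I S := by
      rw [Finset.disjoint_left]
      intro z hz hzS
      exact ((hmem z).1 hzS).1 hz
    obtain ⟨e, he, hIe, hek, hc⟩ := h' I S hI hdis (Finset.card_pos.2 ⟨x, hxS⟩) hsm
    obtain ⟨z, hz⟩ := Finset.card_pos.1 (by omega : 0 < (e ∩ S).card)
    have hzeS := Finset.mem_inter.1 hz
    have hex : ∃ w ∈ e, w ∉ I ∪ (e ∩ S) := by
      by_contra hno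
      push Not at hno
      have h1 := Finset.card_le_card (show e ⊆ I ∪ (e ∩ S) from hno)
      have h2 := Finset.card_union_le I (e ∩ S)
      omega
    obtain ⟨w, hwe, hw⟩ := hex
    simp only [Finset.mem_union, Finset.mem_inter, not_or, not_and] at hw
    have hwS := hw.2 hwe
    apply hwS
    rw [hmem]
    refine ⟨hw.1, JConn.trans' (hcard I hI z ((hmem z).1 hzeS.2).1) ((hmem z).1 hzeS.2).2 ?_⟩
    exact ⟨e, he, e, he, Finset.insert_subset hzeS.1 hIe, Finset.insert_subset hwe hIe,
      Relation.ReflTransGen.refl⟩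
  have hstep : ∀ I : Finset (Fin n), I.card = j - 1 → ∀ x, x ∉ I → ∀ y, y ∉ I →
      JConn j H (insert x I) (insert y I) := by
    intro I hI x hx y hy
    rcases hbig I hI x hx with h1 | h1
    · rcases hbig I hI y hy with h2 | h2
      · by_contra hno
        have hdis : Disjoint
            (Finset.univ.filter (fun z => z ∉ I ∧ JConn j H (insert x I) (insert z I)))
            (Finset.univ.filter (fun z => z ∉ I ∧ JConn j H (insert y I) (insert z I))) := by
          rw [Finset.disjoint_left]
          intro z hz1 hz2
          simp only [Finset.mem_filter, Finset.mem_univ, true_and] at hz1 hz2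
          exact hno (JConn.trans' (hcard I hI z hz1.1) hz1.2 hz2.2.symm')
        have h3 := Finset.card_le_univ
          ((Finset.univ.filter (fun z => z ∉ I ∧ JConn j H (insert x I) (insert z I))) ∪
            (Finset.univ.filter (fun z => z ∉ I ∧ JConn j H (insert y I) (insert z I))))
        rw [Finset.card_union_of_disjoint hdis, Fintype.card_fin] at h3
        omega
      · exact (h2 x hx).symm'
    · exact h1 y hy
  have hconn : ∀ d : ℕ, ∀ J1 J2 : Finset (Fin n), J1.card = j → J2.card = j →
      (J1 \ J2).card = d → JConn j H J1 J2 := by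
    intro d
    induction d with
    | zero =>
      intro J1 J2 h1 h2 hd
      have hsub : J1 ⊆ J2 := by
        rw [← Finset.sdiff_eq_empty_iff_subset]; exact Finset.card_eq_zero.1 hd
      have : J1 = J2 := Finset.eq_of_subset_of_card_le hsub (by omega)
      subst this
      exact hrefl J1 h1
    | succ d ih =>
      intro J1 J2 h1 h2 hd
      obtain ⟨x, hx⟩ := Finset.card_pos.1 (by omega : 0 < (J1 \ J2).card)
      have hcc : (J1 \ J2).card = (J2 \ J1).card := by
        rw [Finset.card_sdiff_comm]; omega
      obtain ⟨y, hy⟩ := Finset.card_pos.1 (by omega : 0 < (J2 \ J1).card)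
      rw [Finset.mem_sdiff] at hx hy
      have hI : (J1.erase x).card = j - 1 := by rw [Finset.card_erase_of_mem hx.1, h1]
      have hyI : y ∉ J1.erase x := fun hh => hy.2 (Finset.mem_of_mem_erase hh)
      have hs := hstep (J1.erase x) hI x (by simp) y hyI
      rw [Finset.insert_erase hx.1] at hs
      refine JConn.trans' (hcard _ hI y hyI) hs (ih _ _ (hcard _ hI y hyI) h2 ?_)
      have e : insert y (J1.erase x) \ J2 = (J1 \ J2).erase x := by
        ext z
        simp only [Finset.mem_sdiff, Finset.mem_insert, Finset.mem_erase]
        constructor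
        · rintro ⟨hz | hz, hz2⟩
          · subst hz; exact absurd hy.1 hz2
          · exact ⟨hz.1, hz.2, hz2⟩
        · rintro ⟨hz1, hz2, hz3⟩
          exact ⟨Or.inr ⟨hz1, hz2⟩, hz3⟩
      rw [e, Finset.card_erase_of_mem (Finset.mem_sdiff.2 hx), hd]
      rfl
  refine ⟨fun J1 J2 h1 h2 => hconn _ J1 J2 h1 h2 rfl, ?_⟩
  intro J hJ hiso
  obtain ⟨e, he, -, -, hJe, -⟩ := hrefl J hJ
  exact hiso e he hJe

theorem aux_prob (n k j : ℕ) (hj : 1 ≤ j) (hjk : j ≤ k - 1) (hn : k ≤ n) (p : ℝ)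
    (h0 : 0 ≤ p) (h1 : p ≤ 1) :
    1 - ∑ s ∈ Finset.range (n + 1), (if 1 ≤ s ∧ 2 * s ≤ n then
        (n : ℝ) ^ (j - 1) * ((n : ℝ) ^ s / (s.factorial : ℝ)) *
          Real.exp (-(p * (s * ((n - (j - 1) - s).choose (k - j) : ℝ)))) else 0) ≤
    binomProb n k p (fun H =>
        JConnectedHG n j H ∧ ∀ J : Finset (Fin n), J.card = j → ¬ IsIsolatedSet H J) := by
  set f : ℕ → ℝ := fun s => if 1 ≤ s ∧ 2 * s ≤ n then
          Real.exp (-(p * (s * ((n - (j - 1) - s).choose (k - j) : ℝ)))) else 0 with hf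
  have hf0 : ∀ s, 0 ≤ f s := by
    intro s; simp only [hf]; split_ifs
    · positivity
    · exact le_rfl
  have hU := aux_union n k p h0 h1
    ((Finset.powersetCard (j - 1) (Finset.univ : Finset (Fin n))) ×ˢ
      (Finset.univ : Finset (Fin n)).powerset)
    (fun H => JConnectedHG n j H ∧ ∀ J : Finset (Fin n), J.card = j → ¬ IsIsolatedSet H J)
    (fun q H => (Disjoint q.1 q.2 ∧ 1 ≤ q.2.card ∧ 2 * q.2.card ≤ n) ∧
      Disjoint H (crossSets n k q.1 q.2)) (by
      intro H hH hQ
      by_contra hno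
      apply hQ
      refine aux_det n k j hj hjk hn H hH ?_
      intro I S hI hd hs1 hs2 hdis
      exact hno ⟨(I, S), by simp [hI], ⟨hd, hs1, hs2⟩, hdis⟩)
  refine le_trans (sub_le_sub_left ?_ 1) hU
  have hterm : ∀ q ∈ ((Finset.powersetCard (j - 1) (Finset.univ : Finset (Fin n))) ×ˢ
      (Finset.univ : Finset (Fin n)).powerset),
      binomProb n k p (fun H => (Disjoint q.1 q.2 ∧ 1 ≤ q.2.card ∧ 2 * q.2.card ≤ n) ∧
      Disjoint H (crossSets n k q.1 q.2)) ≤ f q.2.card := by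
    rintro ⟨I, S⟩ hq
    simp only [Finset.mem_product, Finset.mem_powersetCard] at hq
    by_cases hc : Disjoint I S ∧ 1 ≤ S.card ∧ 2 * S.card ≤ n
    · have e : (fun H : Finset (Finset (Fin n)) =>
          (Disjoint I S ∧ 1 ≤ S.card ∧ 2 * S.card ≤ n) ∧
          Disjoint H (crossSets n k I S)) = fun H => Disjoint H (crossSets n k I S) := by
        funext H; simp [hc]
      simp only
      rw [e, aux_avoid n k p (crossSets n k I S) (Finset.filter_subset _ _)]
      simp only [hf]
      rw [if_pos hc.2]
      have hcc := aux_cross_card n k j hj hjk I S hq.1.2 hc.1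
      have hcc' : (S.card : ℝ) * ((n - (j - 1) - S.card).choose (k - j) : ℝ) ≤
        ((crossSets n k I S).card : ℝ) := by exact_mod_cast hcc
      calc (1 - p) ^ (crossSets n k I S).card
          ≤ (Real.exp (-p)) ^ (crossSets n k I S).card :=
            pow_le_pow_left₀ (by linarith) (Real.one_sub_le_exp_neg p) _
        _ = Real.exp (-(p * (crossSets n k I S).card)) := by
            rw [← Real.exp_nat_mul]; ring_nf
        _ ≤ _ := by
            apply Real.exp_le_exp.2
            have := mul_le_mul_of_nonneg_left hcc' h0
            linarith
    · have : binomProb n k p (fun H => (Disjoint I S ∧ 1 ≤ S.card ∧ 2 * S.card ≤ n) ∧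
          Disjoint H (crossSets n k I S)) = 0 := by
        unfold binomProb
        refine Finset.sum_eq_zero fun H _ => ?_
        rw [if_neg (fun hh => hc hh.1)]
      simp only
      rw [this]
      exact hf0 _
  refine (Finset.sum_le_sum hterm).trans ?_
  rw [Finset.sum_product]
  simp only
  rw [Finset.sum_powerset_apply_card, Finset.sum_const, Finset.card_powersetCard,
    Finset.card_univ, Fintype.card_fin, nsmul_eq_mul, Finset.mul_sum]
  refine Finset.sum_le_sum fun s _ => ?_
  rw [nsmul_eq_mul]
  simp only [hf]
  split_ifs
  · rw [mul_assoc]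
    have a1 : ((n.choose (j - 1) : ℕ) : ℝ) ≤ (n : ℝ) ^ (j - 1) := by
      exact_mod_cast Nat.choose_le_pow n (j - 1)
    have a2 : ((n.choose s : ℕ) : ℝ) ≤ (n : ℝ) ^ s / (s.factorial : ℝ) :=
      Nat.choose_le_pow_div s n
    gcongr
  · simp

theorem aux_ratio (n k j s : ℕ) (hj : 1 ≤ j) (hjk : j ≤ k - 1) (hn : 4 * k ≤ n) (hs : 2 * s ≤ n) :
    ((1 : ℝ) / 4) ^ (k - j) ≤
      ((n - (j - 1) - s).choose (k - j) : ℝ) / (n.choose (k - j) : ℝ) ∧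
    1 - ((k - j : ℕ) : ℝ) * ((s + k) / n) ≤
      ((n - (j - 1) - s).choose (k - j) : ℝ) / (n.choose (k - j) : ℝ) := by
  set t := k - j with ht
  have hn0 : (0 : ℝ) < n := by
    have : 0 < n := by omega
    exact_mod_cast this
  have hF : (0 : ℝ) < (t.factorial : ℝ) := by exact_mod_cast Nat.factorial_pos t
  have hNpos : (0 : ℝ) < (n.choose t : ℝ) := by
    exact_mod_cast Nat.choose_pos (by omega)
  have hup : (n.choose t : ℝ) ≤ (n : ℝ) ^ t / (t.factorial : ℝ) := Nat.choose_le_pow_div t n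
  have hlow : (((n - (j - 1) - s + 1 - t : ℕ) : ℝ)) ^ t / (t.factorial : ℝ) ≤
      ((n - (j - 1) - s).choose t : ℝ) := by
    have := Nat.pow_le_choose (α := ℝ) t (n - (j - 1) - s)
    exact this
  have hM : (n : ℝ) - s - k ≤ ((n - (j - 1) - s + 1 - t : ℕ) : ℝ) := by
    have : n ≤ (n - (j - 1) - s + 1 - t) + s + k := by omega
    have h2 : (n : ℝ) ≤ ((n - (j - 1) - s + 1 - t : ℕ) : ℝ) + s + k := by exact_mod_cast this
    linarith
  have hs' : (2 : ℝ) * s ≤ n := by exact_mod_cast hs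
  have hk' : (4 : ℝ) * k ≤ n := by exact_mod_cast hn
  have hy : ((s : ℝ) + k) / n ≤ 3 / 4 := by
    rw [div_le_iff₀ hn0]; linarith
  have hR : (1 - ((s : ℝ) + k) / n) ^ t ≤
      ((n - (j - 1) - s).choose t : ℝ) / (n.choose t : ℝ) := by
    rw [le_div_iff₀ hNpos]
    calc (1 - ((s : ℝ) + k) / n) ^ t * (n.choose t : ℝ)
        ≤ (1 - ((s : ℝ) + k) / n) ^ t * ((n : ℝ) ^ t / (t.factorial : ℝ)) := by
          apply mul_le_mul_of_nonneg_left hup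
          exact pow_nonneg (by linarith) _
      _ = ((n : ℝ) - s - k) ^ t / (t.factorial : ℝ) := by
          rw [← mul_div_assoc, ← mul_pow]
          congr 2
          field_simp
          ring
      _ ≤ (((n - (j - 1) - s + 1 - t : ℕ) : ℝ)) ^ t / (t.factorial : ℝ) := by
          apply div_le_div_of_nonneg_right _ hF.le
          exact pow_le_pow_left₀ (by linarith) hM t
      _ ≤ _ := hlow
  constructor
  · refine le_trans ?_ hR
    exact pow_le_pow_left₀ (by norm_num) (by linarith) t
  · refine le_trans ?_ hR
    have := one_add_mul_le_pow (a := -(((s : ℝ) + k) / n)) (by linarith) t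
    calc _ = 1 + (t : ℝ) * -(((s : ℝ) + k) / n) := by ring
      _ ≤ _ := this
      _ = _ := by ring_nf

theorem aux_termA (n k j s t : ℕ) (hj : 1 ≤ j) (hs : 1 ≤ s) (hn : 1 ≤ n) (c a ρ : ℝ) (hc : 0 ≤ c)
    (ha : 0 < a) (hρa : a ≤ ρ) (hρ : 1 - (t : ℝ) * ((s + k) / n) ≤ ρ)
    (h1 : s * Real.log n ≤ n) (h2 : k * Real.log n ≤ n) :
    (n : ℝ) ^ (j - 1) * ((n : ℝ) ^ s / (s.factorial : ℝ)) *
      Real.exp (-((j * Real.log n + c) * (s * ρ))) ≤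
    Real.exp (-(c * a)) * (Real.exp (2 * j * t) ^ s / (s.factorial : ℝ)) := by
  have hn0 : (0 : ℝ) < n := by exact_mod_cast hn
  have hl : 0 ≤ Real.log n := Real.log_natCast_nonneg n
  set l := Real.log n with hldef
  have hpow : ∀ m : ℕ, (n : ℝ) ^ m = Real.exp (m * l) := by
    intro m
    rw [Real.exp_nat_mul, hldef, Real.exp_log hn0]
  have hs' : (1 : ℝ) ≤ s := by exact_mod_cast hs
  have hj' : (1 : ℝ) ≤ j := by exact_mod_cast hj
  rw [hpow, hpow, ← Real.exp_nat_mul, ← mul_div_assoc, ← mul_div_assoc, div_mul_eq_mul_div,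
    ← Real.exp_add, ← Real.exp_add, ← Real.exp_add]
  apply div_le_div_of_nonneg_right _ (by positivity)
  apply Real.exp_le_exp.2
  rw [Nat.cast_sub hj]
  have e1 : c * a ≤ c * (s * ρ) := by
    apply mul_le_mul_of_nonneg_left _ hc
    nlinarith
  have e2 : ((s : ℝ) + k) / n * l ≤ 2 := by
    rw [div_mul_eq_mul_div, div_le_iff₀ hn0]; linarith
  have e3 : l * 1 - t * 2 ≤ l * ρ := by
    have := mul_le_mul_of_nonneg_left hρ hl
    have := mul_le_mul_of_nonneg_left e2 (Nat.cast_nonneg (α := ℝ) t)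
    nlinarith
  have e4 : (j : ℝ) * s * (l * 1 - t * 2) ≤ j * s * (l * ρ) :=
    mul_le_mul_of_nonneg_left e3 (by positivity)
  have e5 : 0 ≤ ((j : ℝ) - 1) * (s - 1) * l :=
    mul_nonneg (mul_nonneg (by linarith) (by linarith)) hl
  push_cast
  nlinarith

theorem aux_termB (n j s : ℕ) (hj : 1 ≤ j) (hs : 1 ≤ s) (hn : 1 ≤ n) (c a ρ : ℝ) (hc : 0 ≤ c)
    (ha : 0 < a) (hρa : a ≤ ρ) (hl1 : 0 < Real.log n)
    (h1 : n ≤ s * Real.log n) (h2 : Real.exp 1 * Real.log n ≤ Real.exp (a / 2 * Real.log n))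
    (h3 : 2 * (j + 1) ≤ a * s) :
    (n : ℝ) ^ (j - 1) * ((n : ℝ) ^ s / (s.factorial : ℝ)) *
      Real.exp (-((j * Real.log n + c) * (s * ρ))) ≤ Real.exp (-(2 * Real.log n)) := by
  have hn0 : (0 : ℝ) < n := by exact_mod_cast hn
  set l := Real.log n with hldef
  have hs' : (1 : ℝ) ≤ s := by exact_mod_cast hs
  have hj' : (1 : ℝ) ≤ j := by exact_mod_cast hj
  have hfac : (0 : ℝ) < (s.factorial : ℝ) := by positivity
  have hA : (n : ℝ) ^ s / (s.factorial : ℝ) ≤ Real.exp (s * (a / 2 * l)) := by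
    have q1 := Real.pow_div_factorial_le_exp (s : ℝ) (by positivity) s
    calc (n : ℝ) ^ s / (s.factorial : ℝ) ≤ (s * l) ^ s / (s.factorial : ℝ) := by
          gcongr
      _ = l ^ s * ((s : ℝ) ^ s / (s.factorial : ℝ)) := by rw [mul_pow]; ring
      _ ≤ l ^ s * Real.exp s := by gcongr
      _ = (Real.exp 1 * l) ^ s := by
          rw [mul_pow, ← Real.exp_nat_mul]; ring_nf
      _ ≤ (Real.exp (a / 2 * l)) ^ s := by gcongr
      _ = _ := by rw [← Real.exp_nat_mul]
  have hpow : (n : ℝ) ^ (j - 1) = Real.exp (((j : ℝ) - 1) * l) := by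
    have : (j : ℝ) - 1 = ((j - 1 : ℕ) : ℝ) := by rw [Nat.cast_sub hj]; simp
    rw [this, Real.exp_nat_mul, hldef, Real.exp_log hn0]
  calc _ ≤ Real.exp (((j : ℝ) - 1) * l) * Real.exp (s * (a / 2 * l)) *
        Real.exp (-((j * l + c) * (s * ρ))) := by
        rw [hpow]; gcongr
    _ = Real.exp (((j : ℝ) - 1) * l + s * (a / 2 * l) - ((j * l + c) * (s * ρ))) := by
        rw [← Real.exp_add, ← Real.exp_add]; congr 1
    _ ≤ _ := by
        apply Real.exp_le_exp.2
        have g1 : l * (s * a) ≤ (j * l + c) * (s * ρ) := by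
          apply mul_le_mul
          · nlinarith
          · gcongr
          · positivity
          · positivity
        have g2 := mul_le_mul_of_nonneg_left h3 hl1.le
        nlinarith

theorem aux_bound (n k j : ℕ) (hj : 1 ≤ j) (hjk : j ≤ k - 1) (hn : 4 * k ≤ n) (p c : ℝ)
    (hc : 0 ≤ c) (h0 : 0 ≤ p) (h1 : p ≤ 1)
    (hp : p = ((j : ℝ) * Real.log n + c) / (n.choose (k - j) : ℝ))
    (hl1 : 0 < Real.log n) (hkl : k * Real.log n ≤ n)
    (h2 : Real.exp 1 * Real.log n ≤ Real.exp ((1 / 4 : ℝ) ^ (k - j) / 2 * Real.log n))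
    (h3 : 2 * (j + 1) / (1 / 4 : ℝ) ^ (k - j) * Real.log n ≤ n) :
    1 - (Real.exp (-(c * (1 / 4 : ℝ) ^ (k - j))) * Real.exp (Real.exp (2 * j * (k - j : ℕ))) +
      ((n : ℝ) + 1) * Real.exp (-(2 * Real.log n))) ≤
    binomProb n k p (fun H =>
        JConnectedHG n j H ∧ ∀ J : Finset (Fin n), J.card = j → ¬ IsIsolatedSet H J) := by
  refine le_trans (sub_le_sub_left ?_ 1) (aux_prob n k j hj hjk (by omega) p h0 h1)
  set a : ℝ := (1 / 4 : ℝ) ^ (k - j) with ha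
  have ha0 : 0 < a := by positivity
  set E := Real.exp (2 * j * (k - j : ℕ)) with hE
  have hn1 : 1 ≤ n := by omega
  have hterm : ∀ s ∈ Finset.range (n + 1), (if 1 ≤ s ∧ 2 * s ≤ n then
        (n : ℝ) ^ (j - 1) * ((n : ℝ) ^ s / (s.factorial : ℝ)) *
          Real.exp (-(p * (s * ((n - (j - 1) - s).choose (k - j) : ℝ)))) else 0) ≤
      Real.exp (-(c * a)) * (E ^ s / (s.factorial : ℝ)) + Real.exp (-(2 * Real.log n)) := by
    intro s _
    split_ifs with hs
    · have hr := aux_ratio n k j s hj hjk hn hs.2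
      have e : p * (s * ((n - (j - 1) - s).choose (k - j) : ℝ)) =
          ((j : ℝ) * Real.log n + c) *
          (s * (((n - (j - 1) - s).choose (k - j) : ℝ) / (n.choose (k - j) : ℝ))) := by
        rw [hp]; ring
      rw [e]
      by_cases hsl : s * Real.log n ≤ n
      · have := aux_termA n k j s (k - j) hj hs.1 hn1 c a _ hc ha0 hr.1 hr.2 hsl hkl
        have := Real.exp_pos (-(2 * Real.log n))
        linarith
      · push Not at hsl
        have h3' : 2 * ((j : ℝ) + 1) ≤ a * s := by
          have : 2 * ((j : ℝ) + 1) / a ≤ s := by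
            by_contra hlt
            push Not at hlt
            have := mul_lt_mul_of_pos_right hlt hl1
            linarith
          rw [div_le_iff₀ ha0] at this
          linarith
        have := aux_termB n j s hj hs.1 hn1 c a _ hc ha0 hr.1 hl1 hsl.le h2 h3'
        have : 0 ≤ Real.exp (-(c * a)) * (E ^ s / (s.factorial : ℝ)) := by positivity
        linarith
    · positivity
  refine (Finset.sum_le_sum hterm).trans ?_
  rw [Finset.sum_add_distrib, ← Finset.mul_sum, Finset.sum_const, Finset.card_range, nsmul_eq_mul]
  have := Real.sum_le_exp_of_nonneg (x := E) (Real.exp_pos _).le (n + 1)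
  push_cast
  gcongr

/-- **Corollary, part 2.** Let `p = (j log n + c_n)/C(n,k-j)` (a probability). If `c_n → ∞`,
then with high probability `H^k(n,p)` is `j`-connected, and in particular contains no isolated
`j`-set. -/
theorem above_threshold_connected (k j : ℕ) (hk : 3 ≤ k) (hj : 1 ≤ j) (hjk : j ≤ k - 1)
    (p c : ℕ → ℝ)
    (hp01 : ∀ n : ℕ, 0 ≤ p n ∧ p n ≤ 1)
    (hcinf : Tendsto c atTop atTop)
    (hp : ∀ n : ℕ, p n = ((j : ℝ) * Real.log n + c n) / (n.choose (k - j) : ℝ)) :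
    Tendsto (fun n : ℕ => binomProb n k (p n) (fun H =>
        JConnectedHG n j H ∧ ∀ J : Finset (Fin n), J.card = j → ¬ IsIsolatedSet H J))
      atTop (nhds 1) := by
  have ha0 : (0 : ℝ) < (1 / 4 : ℝ) ^ (k - j) := by positivity
  set a : ℝ := (1 / 4 : ℝ) ^ (k - j) with ha
  have hcast : Tendsto (fun n : ℕ => (n : ℝ)) atTop atTop := tendsto_natCast_atTop_atTop
  have hlog : Tendsto (fun n : ℕ => Real.log n) atTop atTop := Real.tendsto_log_atTop.comp hcast
  have hlin : ∀ C : ℝ, ∀ᶠ n : ℕ in atTop, C * Real.log n ≤ n := by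
    intro C
    have h1 : (fun x : ℝ => C * Real.log x) =o[atTop] (fun x : ℝ => x) :=
      Real.isLittleO_log_id_atTop.const_mul_left C
    have h2 := hcast.eventually (h1.bound (zero_lt_one))
    filter_upwards [h2] with n hn
    have := le_trans (Real.le_norm_self _) hn
    simpa using this
  have hexp : ∀ᶠ n : ℕ in atTop,
      Real.exp 1 * Real.log n ≤ Real.exp (a / 2 * Real.log n) := by
    have h1 : (fun x : ℝ => Real.exp 1 * x) =o[atTop] (fun x : ℝ => Real.exp (a / 2 * x)) := by
      have := (isLittleO_pow_exp_pos_mul_atTop 1 (half_pos ha0)).const_mul_left (Real.exp 1)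
      simpa using this
    have h2 := hlog.eventually (h1.bound (zero_lt_one))
    filter_upwards [h2] with n hn
    have := le_trans (Real.le_norm_self _) hn
    simpa using this
  have hlow : ∀ᶠ n : ℕ in atTop,
      1 - (Real.exp (-(c n * a)) * Real.exp (Real.exp (2 * j * (k - j : ℕ))) +
        ((n : ℝ) + 1) * Real.exp (-(2 * Real.log n))) ≤
      binomProb n k (p n) (fun H =>
        JConnectedHG n j H ∧ ∀ J : Finset (Fin n), J.card = j → ¬ IsIsolatedSet H J) := by
    filter_upwards [hcinf.eventually_ge_atTop 0, hlog.eventually_gt_atTop 0, hlin k,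
      hlin (2 * (j + 1) / a), hexp, eventually_ge_atTop (4 * k)] with n h1 h2 h3 h4 h5 h6
    exact aux_bound n k j hj hjk h6 (p n) (c n) h1 (hp01 n).1 (hp01 n).2 (hp n) h2 h3 h5 h4
  have hlim : Tendsto (fun n : ℕ =>
      1 - (Real.exp (-(c n * a)) * Real.exp (Real.exp (2 * j * (k - j : ℕ))) +
        ((n : ℝ) + 1) * Real.exp (-(2 * Real.log n)))) atTop (nhds 1) := by
    have t1 : Tendsto (fun n : ℕ => Real.exp (-(c n * a))) atTop (nhds 0) :=
      Real.tendsto_exp_neg_atTop_nhds_zero.comp (hcinf.atTop_mul_const ha0)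
    have t2 : Tendsto (fun n : ℕ => ((n : ℝ) + 1) * Real.exp (-(2 * Real.log n)))
        atTop (nhds 0) := by
      have u1 : Tendsto (fun n : ℕ => ((n : ℝ))⁻¹ + ((n : ℝ))⁻¹ * ((n : ℝ))⁻¹) atTop (nhds 0) := by
        have v := tendsto_inv_atTop_zero.comp hcast
        simpa using v.add (v.mul v)
      refine u1.congr' ?_
      filter_upwards [eventually_ge_atTop 1] with n hn
      have hn0 : (0 : ℝ) < n := by exact_mod_cast hn
      have : Real.exp (-(2 * Real.log n)) = ((n : ℝ))⁻¹ * ((n : ℝ))⁻¹ := by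
        rw [two_mul, neg_add, Real.exp_add, Real.exp_neg, Real.exp_log hn0]
      rw [this]
      field_simp
    have := ((t1.mul_const (Real.exp (Real.exp (2 * j * (k - j : ℕ))))).add t2).const_sub 1
    simpa using this
  exact tendsto_of_tendsto_of_tendsto_of_le_of_le' hlim tendsto_const_nhds hlow
    (Eventually.of_forall fun n => aux_le_one n k (p n) (hp01 n).1 (hp01 n).2 _)

end
end

section
/- Let k ≥ 3 and 1 ≤ j ≤ k−1 be integers and let s ≥ 1 be an integer. Then the number of well-constructed k-uniform hypergraphs of j-size s, counted up to isomorphism, is at most 2^{k·s²}. -/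
noncomputable section

/-- `J` is a discovered `j`-set after the edges in `es` have been added, starting from the
initial `j`-set `J0`: it is a `j`-set which is `J0` itself or lies in one of the edges. -/
def DiscoveredJ {V : Type*} (j : ℕ) (J0 : Finset V) (es : List (Finset V))
    (J : Finset V) : Prop :=
  J.card = j ∧ (J = J0 ∨ ∃ e ∈ es, J ⊆ e)

/-- The edge `e` is a good step of the search process after the edges `es` (with initial `j`-set
`J0`): it contains at least one previously discovered `j`-set and at least one previously
undiscovered `j`-set. -/
def GoodStep {V : Type*} (j : ℕ) (J0 : Finset V) (es : List (Finset V))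
    (e : Finset V) : Prop :=
  (∃ J : Finset V, DiscoveredJ j J0 es J ∧ J ⊆ e) ∧
  (∃ J : Finset V, J ⊆ e ∧ J.card = j ∧ ¬ DiscoveredJ j J0 es J)

/-- A `k`-uniform hypergraph with edge set `H` is well-constructed (with parameter `j`):
its edges can be ordered so that, starting from some initial `j`-set, each successive edge
contains a previously discovered `j`-set and a previously undiscovered `j`-set. -/
def IsWellConstructed {V : Type*} [DecidableEq V] (j k : ℕ) (H : Finset (Finset V)) : Prop :=
  (∀ e ∈ H, e.card = k) ∧
  ∃ (J0 : Finset V) (l : List (Finset V)), J0.card = j ∧ l.Nodup ∧ l.toFinset = H ∧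
    ∀ i : Fin l.length, GoodStep j J0 (l.take i.1) (l.get i)

/-- The `j`-size of a hypergraph with edge set `H`: the number of `j`-sets of vertices
contained in at least one edge. -/
def jSize {m : ℕ} (j : ℕ) (H : Finset (Finset (Fin m))) : ℕ :=
  ((Finset.powersetCard j (Finset.univ : Finset (Fin m))).filter
    (fun J => ∃ e ∈ H, J ⊆ e)).card

theorem card_le_jSize_aux {m : ℕ} (j k : ℕ) (H : Finset (Finset (Fin m)))
    (h : IsWellConstructed j k H) : H.card ≤ jSize j H := by
  obtain ⟨_, J0, l, _, hnd, hl, hg⟩ := h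
  choose J hJ1 hJ2 hJ3 using fun i => (hg i).2
  have hinj : Function.Injective J := by
    have key : ∀ i i' : Fin l.length, i < i' → J i ≠ J i' := by
      intro i i' hlt heq
      apply hJ3 i'
      refine ⟨hJ2 i', Or.inr ⟨l.get i, ?_, heq ▸ hJ1 i⟩⟩
      rw [List.mem_take_iff_getElem]
      refine ⟨i.1, ?_, rfl⟩
      have := i.2
      have : i.1 < i'.1 := hlt
      omega
    intro i i' heq
    rcases lt_trichotomy i i' with h | h | h
    · exact absurd heq (key _ _ h)
    · exact h
    · exact absurd heq.symm (key _ _ h)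
  have hc : H.card = l.length := by
    rw [← hl, List.toFinset_card_of_nodup hnd]
  have hsub : (Finset.univ.image J) ⊆
      ((Finset.powersetCard j (Finset.univ : Finset (Fin m))).filter
        (fun J => ∃ e ∈ H, J ⊆ e)) := by
    intro x hx
    obtain ⟨i, _, rfl⟩ := Finset.mem_image.1 hx
    rw [Finset.mem_filter, Finset.mem_powersetCard]
    refine ⟨⟨Finset.subset_univ _, hJ2 i⟩, l.get i, ?_, hJ1 i⟩
    rw [← hl, List.mem_toFinset]
    exact List.get_mem l i
  have := Finset.card_le_card hsub
  rw [Finset.card_image_of_injective _ hinj, Finset.card_univ, Fintype.card_fin] at this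
  rw [hc]
  exact this

theorem exists_enum_aux {α : Type*} [DecidableEq α] (H : Finset α) (s : ℕ)
    (hne : H.Nonempty) (hc : H.card ≤ s) :
    ∃ g : Fin s → α, Finset.univ.image g = H := by
  obtain ⟨a, ha⟩ := hne
  refine ⟨fun i => if h : i.1 < H.card then (H.equivFin.symm ⟨i.1, h⟩).1 else a, ?_⟩
  ext x
  simp only [Finset.mem_image, Finset.mem_univ, true_and]
  constructor
  · rintro ⟨i, rfl⟩
    split_ifs with h
    · exact (H.equivFin.symm ⟨i.1, h⟩).2
    · exact ha
  · intro hx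
    have hlt := (H.equivFin ⟨x, hx⟩).2
    refine ⟨⟨(H.equivFin ⟨x, hx⟩).1, by omega⟩, ?_⟩
    simp

/-- **Proposition 6.** For `k ≥ 3`, `1 ≤ j ≤ k-1` and `s ≥ 1`, the number of well-constructed
`k`-uniform hypergraphs of `j`-size `s`, counted up to isomorphism, is at most `2^{k·s²}`.
(Every such hypergraph has at most `k·s` vertices in its edges, so all isomorphism classes are
represented on the vertex set `Fin (k·s)`; the counting up to isomorphism is expressed by a map
to `Fin (2^{k·s²})` whose fibres are exactly the isomorphism classes.) -/
theorem wellConstructed_count (k j s : ℕ) (hk : 3 ≤ k) (hj : 1 ≤ j) (hjk : j ≤ k - 1)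
    (hs : 1 ≤ s) :
    ∃ f : {H : Finset (Finset (Fin (k * s))) // IsWellConstructed j k H ∧ jSize j H = s} →
        Fin (2 ^ (k * s ^ 2)),
      ∀ H1 H2, (f H1 = f H2 ↔
        ∃ π : Equiv.Perm (Fin (k * s)), H1.1.image (fun e => e.image π) = H2.1) := by
  classical
  let T := {H : Finset (Finset (Fin (k * s))) // IsWellConstructed j k H ∧ jSize j H = s}
  have henum : ∀ H : T, ∃ g : Fin s → Finset (Fin (k * s)), Finset.univ.image g = H.1 := by
    intro H
    apply exists_enum_aux
    · rw [Finset.nonempty_iff_ne_empty]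
      intro h0
      have h2 := H.2.2
      rw [h0] at h2
      simp [jSize] at h2
      omega
    · exact (card_le_jSize_aux j k H.1 H.2.1).trans H.2.2.le
  choose g hg using henum
  have ginj : Function.Injective g := by
    intro a b hab
    apply Subtype.ext
    rw [← hg a, ← hg b, hab]
  have hcard : Fintype.card T ≤ 2 ^ (k * s ^ 2) := by
    refine (Fintype.card_le_of_injective g ginj).trans (le_of_eq ?_)
    rw [Fintype.card_fun, Fintype.card_finset, Fintype.card_fin, Fintype.card_fin, ← pow_mul]
    congr 1
    ring
  let S : Setoid T :=
    { r := fun H1 H2 => ∃ π : Equiv.Perm (Fin (k * s)), H1.1.image (fun e => e.image π) = H2.1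
      iseqv :=
        { refl := fun H => ⟨1, by simp⟩
          symm := by
            rintro H1 H2 ⟨π, h⟩
            refine ⟨π.symm, ?_⟩
            rw [← h, Finset.image_image]
            simp [Function.comp_def, Finset.image_image]
          trans := by
            rintro H1 H2 H3 ⟨π, h⟩ ⟨σ, h'⟩
            refine ⟨π.trans σ, ?_⟩
            rw [← h', ← h, Finset.image_image]
            simp [Function.comp_def, Finset.image_image] } }
  have hq : Fintype.card (Quotient S) ≤ Fintype.card (Fin (2 ^ (k * s ^ 2))) := by
    rw [Fintype.card_fin]
    exact (Fintype.card_quotient_le S).trans hcard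
  obtain ⟨F⟩ := Function.Embedding.nonempty_of_card_le hq
  refine ⟨fun H => F (Quotient.mk S H), fun H1 H2 => ?_⟩
  rw [F.injective.eq_iff]
  exact Quotient.eq (r := S)

end
end

section
/- Let k ≥ 3 and 1 ≤ j ≤ k−1 be integers, let ω = log log n, and suppose p satisfies (j·log n − ω)/C(n,k−j) ≤ p ≤ (j·log n + ω)/C(n,k−j). For an integer r with 3 ≤ r ≤ log log n, let X_r be the number of j-components of H^k(n,p) consisting of exactly r j-sets. Then for all sufficiently large n, E(X_r) ≤ n^{−4rj/7}. -/
open Filter Asymptotics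

open scoped Classical

noncomputable section

/-- The `k`-sets containing exactly one member of `C`. -/
def boundarySets (n k : ℕ) (C : Finset (Finset (Fin n))) : Finset (Finset (Fin n)) :=
  (kSets n k).filter (fun e => ∃ J ∈ C, J ⊆ e ∧ ∀ J' ∈ C, J' ⊆ e → J' = J)

lemma prob_le {α : Type*} [DecidableEq α] (K S B : Finset α) (p : ℝ) (hp0 : 0 ≤ p) (hp1 : p ≤ 1)
    (hS : S ⊆ K) (hB : B ⊆ K) :
    ∑ H ∈ K.powerset, p ^ H.card * (1 - p) ^ (K.card - H.card) *
      (if S ⊆ H ∧ Disjoint B H then 1 else 0) ≤ p ^ S.card * (1 - p) ^ B.card := by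
  have h1 : ∑ H ∈ K.powerset, p ^ H.card * (1 - p) ^ (K.card - H.card) *
      (if S ⊆ H ∧ Disjoint B H then 1 else 0) =
      ∏ i ∈ K, ((if i ∈ B then 0 else p) + (if i ∈ S then 0 else 1 - p)) := by
    rw [Finset.prod_add]
    refine Finset.sum_congr rfl fun H hH => ?_
    rw [Finset.mem_powerset] at hH
    split_ifs with h
    · obtain ⟨h1, h2⟩ := h
      rw [mul_one]
      congr 1
      · rw [Finset.prod_congr rfl (g := fun _ => p)]
        · simp
        · intro i hi
          rw [if_neg]
          intro hb
          exact (Finset.disjoint_left.mp h2) hb hi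
      · rw [Finset.prod_congr rfl (g := fun _ => 1 - p)]
        · simp [Finset.card_sdiff_of_subset hH]
        · intro i hi
          rw [if_neg]
          intro hb
          exact (Finset.mem_sdiff.mp hi).2 (h1 hb)
    · rw [mul_zero]
      symm
      by_cases hS' : S ⊆ H
      · have : ¬ Disjoint B H := fun hd => h ⟨hS', hd⟩
        rw [Finset.not_disjoint_iff] at this
        obtain ⟨a, ha, ha'⟩ := this
        rw [Finset.prod_eq_zero ha' (by simp [ha]), zero_mul]
      · rw [Finset.not_subset] at hS'
        obtain ⟨a, ha, ha'⟩ := hS'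
        rw [Finset.prod_eq_zero (s := K \ H) (Finset.mem_sdiff.mpr ⟨hS ha, ha'⟩) (by simp [ha]),
          mul_zero]
  rw [h1]
  have h2 : p ^ S.card * (1 - p) ^ B.card =
      ∏ i ∈ K, ((if i ∈ S then p else 1) * (if i ∈ B then 1 - p else 1)) := by
    rw [Finset.prod_mul_distrib, Finset.prod_ite_mem, Finset.prod_ite_mem,
      Finset.inter_eq_right.mpr hS, Finset.inter_eq_right.mpr hB]
    simp
  rw [h2]
  refine Finset.prod_le_prod ?_ ?_
  · intro i _
    split_ifs <;> linarith
  · intro i _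
    split_ifs <;> nlinarith

lemma comp_struct {n k j : ℕ} (hj : 1 ≤ j) (hjk : j < k) (H C : Finset (Finset (Fin n)))
    (hH : H ⊆ kSets n k) (hC : IsJComponent n j H C) :
    (∃ S ⊆ H, S ⊆ (C.biUnion id).powersetCard k ∧
      (C.biUnion id).card ≤ j + (k - j) * S.card) ∧ Disjoint (boundarySets n k C) H := by
  obtain ⟨⟨J0, hJ0⟩, hcard, hconn, hmax⟩ := hC
  have hk : ∀ e ∈ H, e.card = k := fun e he => (Finset.mem_powersetCard.mp (hH he)).2
  -- every j-subset of an edge meeting C lies in C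
  have hsub : ∀ e ∈ H, ∀ J ∈ C, J ⊆ e → ∀ J' ⊆ e, J'.card = j → J' ∈ C := by
    intro e he J hJ hJe J' hJ'e hJ'
    exact hmax J' hJ' ⟨J, hJ, e, he, e, he, hJ'e, hJe, Relation.ReflTransGen.refl⟩
  constructor
  · set U := H.filter (fun e => ∃ J ∈ C, J ⊆ e) with hU
    have hUV : ∀ e ∈ U, e ⊆ C.biUnion id := by
      intro e he x hx
      obtain ⟨heH, J, hJ, hJe⟩ := Finset.mem_filter.mp he
      obtain ⟨t, hxt, hte, ht⟩ := Finset.exists_subsuperset_card_eq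
        (s := {x}) (t := e) (n := j) (by simpa using hx) (by simpa using hj)
        (by rw [hk e heH]; omega)
      exact Finset.mem_biUnion.mpr ⟨t, hsub e heH J hJ hJe t hte ht, by simpa using hxt⟩
    obtain ⟨e0, he0, _, _, hJe0, _, _⟩ := hconn J0 hJ0 J0 hJ0
    have he0U : e0 ∈ U := Finset.mem_filter.mpr ⟨he0, J0, hJ0, hJe0⟩
    obtain ⟨S, hS, hSmax⟩ := Finset.exists_max_image
      (U.powerset.filter (fun S => e0 ∈ S ∧ (S.biUnion id).card ≤ j + (k - j) * S.card))
      Finset.card ⟨{e0}, by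
        simp only [Finset.mem_filter, Finset.mem_powerset, Finset.singleton_subset_iff]
        refine ⟨he0U, by simp, ?_⟩
        simp [hk e0 he0]; omega⟩
    obtain ⟨hSU, he0S, hScard⟩ := Finset.mem_filter.mp hS
    rw [Finset.mem_powerset] at hSU
    have hstep : ∀ e ∈ S, ∀ f ∈ H, j ≤ (e ∩ f).card → f ∈ S := by
      intro e he f hf hef
      by_contra hfS
      obtain ⟨heH, J, hJ, hJe⟩ := Finset.mem_filter.mp (hSU he)
      obtain ⟨t, ht, htj⟩ := Finset.exists_subset_card_eq hef
      have htC : t ∈ C := hsub e heH J hJ hJe t (ht.trans Finset.inter_subset_left) htj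
      have hfU : f ∈ U :=
        Finset.mem_filter.mpr ⟨hf, t, htC, ht.trans Finset.inter_subset_right⟩
      have hle := hSmax (insert f S) (by
        simp only [Finset.mem_filter, Finset.mem_powerset]
        refine ⟨Finset.insert_subset hfU hSU, Finset.mem_insert_of_mem he0S, ?_⟩
        rw [Finset.biUnion_insert, Finset.card_insert_of_notMem hfS, id]
        have h1 := Finset.card_union_add_card_inter f (S.biUnion id)
        have h2 : j ≤ (f ∩ S.biUnion id).card := by
          refine hef.trans (Finset.card_le_card ?_)
          intro x hx
          rw [Finset.mem_inter] at hx
          exact Finset.mem_inter.mpr ⟨hx.2, Finset.mem_biUnion.mpr ⟨e, he, hx.1⟩⟩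
        have h3 := hk f hf
        rw [mul_add]
        omega)
      rw [Finset.card_insert_of_notMem hfS] at hle
      omega
    have hreach : ∀ e f, Relation.ReflTransGen
        (fun e f => e ∈ H ∧ f ∈ H ∧ j ≤ (e ∩ f).card) e f → e ∈ S → f ∈ S := by
      intro e f hef he
      induction hef with
      | refl => exact he
      | tail _ h ih => exact hstep _ ih _ h.2.1 h.2.2
    refine ⟨S, hSU.trans (Finset.filter_subset _ _), ?_, ?_⟩
    · intro e he
      exact Finset.mem_powersetCard.mpr ⟨hUV e (hSU he),
        hk e (Finset.mem_filter.mp (hSU he)).1⟩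
    · refine (Finset.card_le_card ?_).trans hScard
      intro x hx
      obtain ⟨J, hJ, hxJ⟩ := Finset.mem_biUnion.mp hx
      obtain ⟨e1, he1, e2, he2, h1, h2, hw⟩ := hconn J0 hJ0 J hJ
      have he1S : e1 ∈ S := by
        refine hstep e0 he0S e1 he1 ?_
        rw [← hcard J0 hJ0]
        exact Finset.card_le_card (Finset.subset_inter hJe0 h1)
      exact Finset.mem_biUnion.mpr ⟨e2, hreach _ _ hw he1S, h2 hxJ⟩
  · rw [Finset.disjoint_left]
    intro e heB heH
    obtain ⟨_, J, hJ, hJe, huniq⟩ := Finset.mem_filter.mp heB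
    have hJc := hcard J hJ
    -- pick x in e \ J; a j-subset of e containing x differs from J
    have : ∃ x ∈ e, x ∉ J := by
      by_contra! hcon
      have := Finset.card_le_card (show e ⊆ J from hcon)
      rw [hk e heH] at this; omega
    obtain ⟨x, hx, hxJ⟩ := this
    obtain ⟨t, hxt, hte, ht⟩ := Finset.exists_subsuperset_card_eq
        (s := {x}) (t := e) (n := j) (by simpa using hx) (by simpa using hj)
        (by rw [hk e heH]; omega)
    have := huniq t (hsub e heH J hJ hJe t hte ht) hte
    rw [← this] at hxJ
    exact hxJ (by simpa using hxt)

lemma card_supersets {n k : ℕ} (T : Finset (Fin n)) (hT : T.card ≤ k) :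
    ((kSets n k).filter (fun e => T ⊆ e)).card = (n - T.card).choose (k - T.card) := by
  have : (kSets n k).filter (fun e => T ⊆ e) =
      ((Tᶜ).powersetCard (k - T.card)).image (fun s => T ∪ s) := by
    ext e
    simp only [kSets, Finset.mem_filter, Finset.mem_powersetCard, Finset.mem_image,
      Finset.subset_univ, true_and]
    constructor
    · rintro ⟨he, hTe⟩
      refine ⟨e \ T, ⟨?_, ?_⟩, Finset.union_sdiff_of_subset hTe⟩
      · intro x hx
        simp at hx ⊢
        exact hx.2
      · rw [Finset.card_sdiff_of_subset hTe, he]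
    · rintro ⟨s, ⟨hs, hsc⟩, rfl⟩
      refine ⟨?_, Finset.subset_union_left⟩
      rw [Finset.card_union_of_disjoint, hsc]
      · omega
      · exact Finset.disjoint_left.mpr fun x hx hxs => (Finset.mem_compl.mp (hs hxs)) hx
  rw [this, Finset.card_image_of_injOn]
  · rw [Finset.card_powersetCard, Finset.card_compl, Fintype.card_fin]
  · intro s hs s' hs' h
    have hs := (Finset.mem_powersetCard.mp hs).1
    have hs' := (Finset.mem_powersetCard.mp hs').1
    ext x
    have hx := congrArg (fun A => x ∈ A) h
    simp only [Finset.mem_union, eq_iff_iff] at hx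
    have a1 := @hs x
    have a2 := @hs' x
    rw [Finset.mem_compl] at a1 a2
    tauto

lemma choose_sub_bound (n d : ℕ) (hd : 1 ≤ d) (j : ℕ) :
    n.choose d ≤ (n - j).choose d + j * n ^ (d - 1) := by
  induction j with
  | zero => simp
  | succ i ih =>
    have : (n - i).choose d ≤ (n - (i + 1)).choose d + n ^ (d - 1) := by
      obtain ⟨d, rfl⟩ : ∃ d', d = d' + 1 := ⟨d - 1, by omega⟩
      rcases Nat.eq_zero_or_pos (n - i) with h | h
      · rw [h]; simp
      · obtain ⟨m, hm⟩ : ∃ m, n - i = m + 1 := ⟨n - i - 1, by omega⟩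
        rw [show n - (i + 1) = m by omega, hm, Nat.choose_succ_succ']
        have h1 := Nat.choose_le_pow m d
        have h2 : m ^ d ≤ n ^ d := Nat.pow_le_pow_left (by omega) d
        simp only [Nat.add_sub_cancel]
        omega
    rw [add_mul, one_mul]
    omega

lemma boundary_card {n k j : ℕ} (hjk : j < k) (C : Finset (Finset (Fin n)))
    (hC : ∀ J ∈ C, J.card = j) :
    C.card * n.choose (k - j) ≤
      (boundarySets n k C).card + C.card * ((j + C.card) * n ^ (k - j - 1)) := by
  set BJ : Finset (Fin n) → Finset (Finset (Fin n)) := fun J =>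
    (kSets n k).filter (fun e => J ⊆ e ∧ ∀ J' ∈ C, J' ⊆ e → J' = J) with hBJ
  have hdisj : (C : Set (Finset (Fin n))).PairwiseDisjoint BJ := by
    intro J hJ J' hJ' hne
    rw [Function.onFun, Finset.disjoint_left]
    intro e he he'
    have h1 := (Finset.mem_filter.mp he).2
    have h2 := (Finset.mem_filter.mp he').2
    exact hne (h2.2 J hJ h1.1)
  have hB : C.biUnion BJ ⊆ boundarySets n k C := by
    intro e he
    obtain ⟨J, hJ, he⟩ := Finset.mem_biUnion.mp he
    obtain ⟨h1, h2⟩ := Finset.mem_filter.mp he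
    exact Finset.mem_filter.mpr ⟨h1, J, hJ, h2⟩
  have hcard : ∑ J ∈ C, (BJ J).card ≤ (boundarySets n k C).card := by
    rw [← Finset.card_biUnion hdisj]
    exact Finset.card_le_card hB
  have hone : ∀ J ∈ C, n.choose (k - j) ≤ (BJ J).card + (j + C.card) * n ^ (k - j - 1) := by
    intro J hJ
    have hJc := hC J hJ
    have h1 := card_supersets (k := k) J (by omega)
    rw [hJc] at h1
    have h2 := choose_sub_bound n (k - j) (by omega) j
    have h3 : (kSets n k).filter (fun e => J ⊆ e) ⊆
        BJ J ∪ (C.erase J).biUnion (fun J' => (kSets n k).filter (fun e => J ⊆ e ∧ J' ⊆ e)) := by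
      intro e he
      obtain ⟨he1, he2⟩ := Finset.mem_filter.mp he
      by_cases hu : ∀ J' ∈ C, J' ⊆ e → J' = J
      · exact Finset.mem_union_left _ (Finset.mem_filter.mpr ⟨he1, he2, hu⟩)
      · push Not at hu
        obtain ⟨J', hJ', hJ'e, hne⟩ := hu
        exact Finset.mem_union_right _ (Finset.mem_biUnion.mpr
          ⟨J', Finset.mem_erase.mpr ⟨hne, hJ'⟩, Finset.mem_filter.mpr ⟨he1, he2, hJ'e⟩⟩)
    have h4 : ((C.erase J).biUnion
        (fun J' => (kSets n k).filter (fun e => J ⊆ e ∧ J' ⊆ e))).card ≤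
        (C.erase J).card * n ^ (k - j - 1) := by
      refine Finset.card_biUnion_le_card_mul _ _ _ ?_
      intro J' hJ'
      obtain ⟨hne, hJ'⟩ := Finset.mem_erase.mp hJ'
      have : ∃ x ∈ J', x ∉ J := by
        by_contra! hcon
        exact hne (Finset.eq_of_subset_of_card_le hcon (by rw [hJc, hC J' hJ']))
      obtain ⟨x, hx, hxJ⟩ := this
      have hins : (insert x J).card = j + 1 := by
        rw [Finset.card_insert_of_notMem hxJ, hJc]
      have h5 := card_supersets (k := k) (insert x J) (by omega)
      rw [hins] at h5
      calc _ ≤ ((kSets n k).filter (fun e => insert x J ⊆ e)).card := by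
            refine Finset.card_le_card ?_
            intro e he
            obtain ⟨he1, he2, he3⟩ := Finset.mem_filter.mp he
            exact Finset.mem_filter.mpr ⟨he1, Finset.insert_subset (he3 hx) he2⟩
        _ = _ := h5
        _ ≤ (n - (j + 1)) ^ (k - (j + 1)) := Nat.choose_le_pow _ _
        _ ≤ n ^ (k - (j + 1)) := Nat.pow_le_pow_left (by omega) _
        _ = n ^ (k - j - 1) := by rw [Nat.sub_sub]
    have h5 : (C.erase J).card * n ^ (k - j - 1) ≤ C.card * n ^ (k - j - 1) :=
      Nat.mul_le_mul_right _ (Finset.card_le_card (Finset.erase_subset _ _))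
    have h6 := (Finset.card_le_card h3).trans (Finset.card_union_le _ _)
    rw [add_mul]
    omega
  have hsum := Finset.sum_le_sum hone
  rw [Finset.sum_add_distrib] at hsum
  simp only [Finset.sum_const, smul_eq_mul] at hsum
  omega

/-- Index set for the union bound: vertex set, candidate component, witnessing edges. -/
def idxSet (n k j r : ℕ) :
    Finset ((_ : Finset (Fin n)) × (Finset (Finset (Fin n)) × Finset (Finset (Fin n)))) :=
  ((Finset.univ : Finset (Finset (Fin n))).filter (fun V => V.card ∈ Finset.Icc j (r * j))).sigma
    (fun V => ((V.powersetCard j).powerset ×ˢ (V.powersetCard k).powerset).filter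
      (fun c => c.1.card = r ∧ V.card ≤ j + (k - j) * c.2.card))

lemma count_le {n k j r : ℕ} (hj : 1 ≤ j) (hjk : j < k) (H : Finset (Finset (Fin n)))
    (hH : H ⊆ kSets n k) :
    Nat.card {C : Finset (Finset (Fin n)) // IsJComponent n j H C ∧ C.card = r} ≤
      ((idxSet n k j r).filter
        (fun t => t.2.2 ⊆ H ∧ Disjoint (boundarySets n k t.2.1) H)).card := by
  rw [Nat.card_eq_fintype_card, Fintype.card_subtype]
  refine Finset.card_le_card_of_surjOn (fun t => t.2.1) ?_
  intro C hC
  simp only [Finset.coe_filter, Finset.mem_univ, true_and, Set.mem_ofPred_eq] at hC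
  obtain ⟨hC, hr⟩ := hC
  obtain ⟨⟨S, hSH, hSV, hV⟩, hdis⟩ := comp_struct hj hjk H C hH hC
  obtain ⟨⟨J0, hJ0⟩, hcard, -, -⟩ := hC
  refine ⟨⟨C.biUnion id, C, S⟩, ?_, rfl⟩
  simp only [Finset.coe_filter, Set.mem_ofPred_eq, idxSet, Finset.mem_sigma, Finset.mem_filter,
    Finset.mem_univ, true_and, Finset.mem_Icc, Finset.mem_product, Finset.mem_powerset]
  refine ⟨⟨⟨?_, ?_⟩, ⟨?_, hSV⟩, hr, hV⟩, hSH, hdis⟩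
  · rw [← hcard J0 hJ0]
    exact Finset.card_le_card (Finset.subset_biUnion_of_mem id hJ0)
  · rw [← hr]
    exact Finset.card_biUnion_le_card_mul _ _ _ fun J hJ => (hcard J hJ).le
  · intro J hJ
    exact Finset.mem_powersetCard.mpr ⟨Finset.subset_biUnion_of_mem id hJ, hcard J hJ⟩

lemma main_bound {n k j r : ℕ} (hj : 1 ≤ j) (hjk : j < k) (hr : 1 ≤ r) (hn : 1 ≤ n)
    (p L Q : ℝ) (hp0 : 0 ≤ p) (hp1 : p ≤ 1) (hL1 : 1 ≤ L) (hLn : L ≤ n)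
    (hpL : p ≤ (L / n) ^ (k - j)) (hQ0 : 0 ≤ Q)
    (hQ : ∀ C : Finset (Finset (Fin n)), C.card = r → (∀ J ∈ C, J.card = j) →
      (1 - p) ^ (boundarySets n k C).card ≤ Q) :
    binomExp n k p (fun H =>
      (Nat.card {C : Finset (Finset (Fin n)) // IsJComponent n j H C ∧ C.card = r} : ℝ)) ≤
    (r * j + 1 : ℝ) * 4 ^ ((r * j) ^ k) * n ^ j * L ^ (r * j) * Q := by
  have hn0 : (0 : ℝ) < n := by exact_mod_cast hn
  have hx0 : 0 ≤ L / n := by positivity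
  have hx1 : L / n ≤ 1 := (div_le_one hn0).mpr hLn
  have hp1' : 0 ≤ 1 - p := by linarith
  calc _ ≤ ∑ H ∈ (kSets n k).powerset, ∑ t ∈ idxSet n k j r,
        p ^ H.card * (1 - p) ^ ((kSets n k).card - H.card) *
        (if t.2.2 ⊆ H ∧ Disjoint (boundarySets n k t.2.1) H then 1 else 0) := by
        unfold binomExp
        refine Finset.sum_le_sum fun H hH => ?_
        rw [← Finset.mul_sum]
        refine mul_le_mul_of_nonneg_left ?_ (by positivity)
        rw [Finset.sum_boole]
        have := count_le (r := r) hj hjk H (Finset.mem_powerset.mp hH)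
        beta_reduce
        exact_mod_cast this
    _ = ∑ t ∈ idxSet n k j r, ∑ H ∈ (kSets n k).powerset,
        p ^ H.card * (1 - p) ^ ((kSets n k).card - H.card) *
        (if t.2.2 ⊆ H ∧ Disjoint (boundarySets n k t.2.1) H then 1 else 0) := Finset.sum_comm
    _ ≤ ∑ t ∈ idxSet n k j r, (L / n) ^ (t.1.card - j) * Q := by
        refine Finset.sum_le_sum fun t ht => ?_
        obtain ⟨V, C, S⟩ := t
        simp only [idxSet, Finset.mem_sigma, Finset.mem_filter,
          Finset.mem_univ, true_and, Finset.mem_Icc, Finset.mem_product,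
          Finset.mem_powerset] at ht
        obtain ⟨⟨hV1, hV2⟩, ⟨hCV, hSV⟩, hCr, hVS⟩ := ht
        refine (prob_le _ S (boundarySets n k C) p hp0 hp1 ?_ (Finset.filter_subset _ _)).trans ?_
        · intro e he
          exact Finset.mem_powersetCard.mpr ⟨Finset.subset_univ _,
            (Finset.mem_powersetCard.mp (hSV he)).2⟩
        refine mul_le_mul ?_ (hQ C hCr fun J hJ => (Finset.mem_powersetCard.mp (hCV hJ)).2)
          (by positivity) (by positivity)
        calc p ^ S.card ≤ ((L / n) ^ (k - j)) ^ S.card := pow_le_pow_left₀ hp0 hpL _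
          _ = (L / n) ^ ((k - j) * S.card) := (pow_mul _ _ _).symm
          _ ≤ (L / n) ^ (V.card - j) := pow_le_pow_of_le_one hx0 hx1 (by omega)
    _ ≤ ∑ V ∈ (Finset.univ : Finset (Finset (Fin n))).filter
          (fun V => V.card ∈ Finset.Icc j (r * j)),
          4 ^ ((r * j) ^ k) * ((L / n) ^ (V.card - j) * Q) := by
        unfold idxSet
        rw [Finset.sum_sigma]
        refine Finset.sum_le_sum fun V hV => ?_
        dsimp only
        rw [Finset.sum_const, nsmul_eq_mul]
        refine mul_le_mul_of_nonneg_right ?_ (by positivity)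
        have hV2 := (Finset.mem_Icc.mp (Finset.mem_filter.mp hV).2).2
        have hrj : 1 ≤ r * j := Nat.mul_pos hr hj
        have hA : V.card.choose j ≤ (r * j) ^ k :=
          (Nat.choose_le_pow _ _).trans ((Nat.pow_le_pow_left hV2 j).trans
            (Nat.pow_le_pow_right hrj hjk.le))
        have hB : V.card.choose k ≤ (r * j) ^ k :=
          (Nat.choose_le_pow _ _).trans (Nat.pow_le_pow_left hV2 k)
        have : (((V.powersetCard j).powerset ×ˢ (V.powersetCard k).powerset).filter
            (fun c => c.1.card = r ∧ V.card ≤ j + (k - j) * c.2.card)).card ≤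
            4 ^ ((r * j) ^ k) := by
          refine (Finset.card_filter_le _ _).trans ?_
          rw [Finset.card_product, Finset.card_powerset, Finset.card_powerset,
            Finset.card_powersetCard, Finset.card_powersetCard,
            show (4 : ℕ) = 2 * 2 from rfl, mul_pow]
          exact Nat.mul_le_mul (Nat.pow_le_pow_right (by norm_num) hA)
            (Nat.pow_le_pow_right (by norm_num) hB)
        exact_mod_cast this
    _ = ∑ v ∈ Finset.Icc j (r * j), ∑ V ∈ ((Finset.univ : Finset (Finset (Fin n))).filter
          (fun V => V.card ∈ Finset.Icc j (r * j))).filter (fun V => V.card = v),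
          4 ^ ((r * j) ^ k) * ((L / n) ^ (V.card - j) * Q) :=
        (Finset.sum_fiberwise_of_maps_to (fun V hV => (Finset.mem_filter.mp hV).2) _).symm
    _ ≤ ∑ v ∈ Finset.Icc j (r * j), 4 ^ ((r * j) ^ k) * n ^ j * L ^ (r * j) * Q := by
        refine Finset.sum_le_sum fun v hv => ?_
        obtain ⟨hv1, hv2⟩ := Finset.mem_Icc.mp hv
        rw [Finset.sum_congr rfl (g := fun _ => (4 : ℝ) ^ ((r * j) ^ k) * ((L / n) ^ (v - j) * Q))
          (fun V hV => by rw [(Finset.mem_filter.mp hV).2]), Finset.sum_const, nsmul_eq_mul]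
        have hc : (((Finset.univ : Finset (Finset (Fin n))).filter
          (fun V => V.card ∈ Finset.Icc j (r * j))).filter (fun V => V.card = v)).card ≤ n ^ v := by
          calc _ ≤ (Finset.powersetCard v (Finset.univ : Finset (Fin n))).card := by
                refine Finset.card_le_card fun V hV => ?_
                exact Finset.mem_powersetCard.mpr ⟨Finset.subset_univ _,
                  (Finset.mem_filter.mp hV).2⟩
            _ = n.choose v := by simp
            _ ≤ n ^ v := Nat.choose_le_pow _ _
        have hc' : ((((Finset.univ : Finset (Finset (Fin n))).filter
          (fun V => V.card ∈ Finset.Icc j (r * j))).filter (fun V => V.card = v)).card : ℝ)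
            ≤ (n : ℝ) ^ v := by exact_mod_cast hc
        calc _ ≤ (n : ℝ) ^ v * (4 ^ ((r * j) ^ k) * ((L / n) ^ (v - j) * Q)) :=
              mul_le_mul_of_nonneg_right hc' (by positivity)
          _ = 4 ^ ((r * j) ^ k) * n ^ j * L ^ (v - j) * Q := by
              have : (n : ℝ) ^ v = n ^ j * n ^ (v - j) := by rw [← pow_add]; congr 1; omega
              rw [this, div_pow]
              field_simp
          _ ≤ _ := by
              have : L ^ (v - j) ≤ L ^ (r * j) := pow_le_pow_right₀ hL1 (by omega)
              gcongr
    _ ≤ _ := by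
        rw [Finset.sum_const, nsmul_eq_mul]
        have hc : ((Finset.Icc j (r * j)).card : ℝ) ≤ r * j + 1 := by
          have : (Finset.Icc j (r * j)).card ≤ r * j + 1 := by rw [Nat.card_Icc]; omega
          exact_mod_cast this
        have : 0 ≤ (4 : ℝ) ^ ((r * j) ^ k) * n ^ j * L ^ (r * j) * Q := by positivity
        calc _ ≤ (r * j + 1 : ℝ) * ((4 : ℝ) ^ ((r * j) ^ k) * n ^ j * L ^ (r * j) * Q) :=
              mul_le_mul_of_nonneg_right hc this
          _ = _ := by ring

lemma pow_le_choose_mul (n d : ℕ) (hn : 2 * d ≤ n) :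
    (n : ℝ) ^ d ≤ (2 * d) ^ d * (n.choose d : ℝ) := by
  have h1 := Nat.pow_le_choose (α := ℝ) d n
  have hf : (0 : ℝ) < d.factorial := by exact_mod_cast Nat.factorial_pos d
  rw [div_le_iff₀ hf] at h1
  have h2 : (d.factorial : ℝ) ≤ (d : ℝ) ^ d := by exact_mod_cast Nat.factorial_le_pow d
  have h3 : (n : ℝ) ≤ 2 * ((n + 1 - d : ℕ) : ℝ) := by
    have : n ≤ 2 * (n + 1 - d) := by omega
    exact_mod_cast this
  calc (n : ℝ) ^ d ≤ (2 * ((n + 1 - d : ℕ) : ℝ)) ^ d := pow_le_pow_left₀ (by positivity) h3 _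
    _ = 2 ^ d * ((n + 1 - d : ℕ) : ℝ) ^ d := mul_pow _ _ _
    _ ≤ 2 ^ d * ((n.choose d : ℝ) * d ^ d) := by
        refine mul_le_mul_of_nonneg_left (h1.trans ?_) (by positivity)
        exact mul_le_mul_of_nonneg_left h2 (by positivity)
    _ = _ := by rw [mul_pow]; ring

lemma little_bound (m : ℕ) (K : ℝ) : ∀ᶠ y : ℝ in atTop, K * Real.log y ^ m ≤ y := by
  have h := (Real.isLittleO_pow_log_id_atTop (n := m)).const_mul_left K
  filter_upwards [h.bound one_pos, eventually_ge_atTop 0] with y hy hy0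
  rw [one_mul, id, Real.norm_of_nonneg hy0] at hy
  exact (le_abs_self _).trans hy

set_option maxHeartbeats 2000000 in
lemma final_step {n k j r : ℕ} (hk : 3 ≤ k) (hj : 1 ≤ j) (hjk : j < k) (hr : 3 ≤ r)
    (hnk : 2 * k ≤ n) (p K A : ℝ) (hA : A = 4 * j * k + 42 * j * (2 * k) ^ k)
    (hK : K = j + 2 * j ^ k + j * (Real.log (4 * j * k) + 1) + 1)
    (hx : 1 ≤ Real.log (Real.log n)) (hy : 1 ≤ Real.log n)
    (hrx : (r : ℝ) ≤ Real.log (Real.log n))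
    (h1 : 7 * K * Real.log (Real.log n) ^ k ≤ Real.log n)
    (h2 : A * Real.log n ≤ n)
    (hp1 : ((j : ℝ) * Real.log n - Real.log (Real.log n)) / (n.choose (k - j) : ℝ) ≤ p)
    (hp2 : p ≤ ((j : ℝ) * Real.log n + Real.log (Real.log n)) / (n.choose (k - j) : ℝ)) :
    binomExp n k p (fun H =>
          (Nat.card {C : Finset (Finset (Fin n)) // IsJComponent n j H C ∧ C.card = r} : ℝ)) ≤
        (n : ℝ) ^ (-(4 * (r : ℝ) * (j : ℝ)) / 7) := by
  set y := Real.log n with hydef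
  set x := Real.log y with hxdef
  set d := k - j with hddef
  have hxy : x ≤ y := (Real.log_le_sub_one_of_pos (by linarith)).trans (by linarith)
  have hjR : (1 : ℝ) ≤ j := by exact_mod_cast hj
  have hkR : (3 : ℝ) ≤ k := by exact_mod_cast hk
  have hrR : (3 : ℝ) ≤ r := by exact_mod_cast hr
  have hnR : (0 : ℝ) < n := by
    have : 0 < n := by omega
    exact_mod_cast this
  have hd1 : 1 ≤ d := by omega
  have hdk : (d : ℝ) ≤ k := by
    have : d ≤ k := by omega
    exact_mod_cast this
  have hc0 : (0 : ℝ) < n.choose d := by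
    have : 0 < n.choose d := Nat.choose_pos (by omega)
    exact_mod_cast this
  have hjy : y ≤ j * y := by nlinarith
  have hp0 : 0 ≤ p := le_trans (div_nonneg (by linarith) hc0.le) hp1
  have hpc := pow_le_choose_mul n d (by omega)
  have hpow : (1 : ℝ) ≤ (2 * k) ^ k := one_le_pow₀ (by linarith)
  have hL1 : 1 ≤ 4 * j * k * y := by
    have : (1 : ℝ) ≤ j * k := by nlinarith
    nlinarith
  have hLn : 4 * j * k * y ≤ n := by
    have : 0 ≤ 42 * (j : ℝ) * (2 * k) ^ k * y := by positivity
    rw [hA] at h2; linarith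
  have hpL : p ≤ (4 * j * k * y / n) ^ d := by
    refine hp2.trans ?_
    rw [div_pow, div_le_div_iff₀ hc0 (by positivity)]
    have a1 : (j : ℝ) * y + x ≤ 2 * j * y := by linarith
    have a2 : 2 * j * y ≤ (2 * j * y) ^ d :=
      le_self_pow₀ (by nlinarith) (by omega)
    have a3 : ((2 : ℝ) * d) ^ d ≤ (2 * k) ^ d :=
      pow_le_pow_left₀ (by positivity) (by linarith) _
    calc ((j : ℝ) * y + x) * n ^ d ≤ (2 * j * y) ^ d * ((2 * k) ^ d * (n.choose d : ℝ)) := by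
          refine mul_le_mul (a1.trans a2) (hpc.trans ?_) (by positivity) (by positivity)
          exact mul_le_mul_of_nonneg_right a3 hc0.le
      _ = _ := by
          rw [← mul_assoc, ← mul_pow]; congr 2; ring
  have hp1' : p ≤ 1 := hpL.trans (pow_le_one₀ (by positivity) ((div_le_one hnR).mpr hLn))
  -- the small correction is at most a 1/21 fraction
  have hsmall : 21 * ((j + r : ℝ) * n ^ (d - 1)) ≤ n.choose d := by
    have b1 : (21 * (j + r : ℝ)) * (2 * k) ^ k ≤ n := by
      have : (21 * (j + r : ℝ)) * (2 * k) ^ k ≤ (42 * j * y) * (2 * k) ^ k := by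
        refine mul_le_mul_of_nonneg_right ?_ (by positivity)
        nlinarith
      have h0 : 0 ≤ 4 * (j : ℝ) * k * y := by positivity
      rw [hA] at h2; linarith
    have b2 : ((2 : ℝ) * d) ^ d ≤ (2 * k) ^ k := by
      refine (pow_le_pow_left₀ (by positivity) (by linarith : (2 : ℝ) * d ≤ 2 * k) _).trans ?_
      exact pow_le_pow_right₀ (by linarith) (by omega)
    have b3 : (n : ℝ) ^ d = n * n ^ (d - 1) := by
      rw [← pow_succ']; congr 1; omega
    have b4 : (2 * k : ℝ) ^ k * (21 * ((j + r : ℝ) * n ^ (d - 1))) ≤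
        (2 * k : ℝ) ^ k * n.choose d := by
      calc _ = ((21 * (j + r : ℝ)) * (2 * k) ^ k) * n ^ (d - 1) := by ring
        _ ≤ n * n ^ (d - 1) := mul_le_mul_of_nonneg_right b1 (by positivity)
        _ = (n : ℝ) ^ d := b3.symm
        _ ≤ _ := hpc.trans (mul_le_mul_of_nonneg_right b2 hc0.le)
    exact le_of_mul_le_mul_left b4 (by positivity)
  have hmain := main_bound (n := n) (k := k) (j := j) (r := r) hj hjk (by omega) (by omega)
    p (4 * j * k * y) (Real.exp (-(20 / 21 * r * (j * y - x)))) hp0 hp1' hL1 hLn hpL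
    (Real.exp_pos _).le (by
      intro C hC hCj
      have hB := boundary_card hjk C hCj
      rw [hC] at hB
      have hB' : (r : ℝ) * n.choose d ≤
          (boundarySets n k C).card + r * ((j + r) * n ^ (d - 1)) := by exact_mod_cast hB
      have hB2 : 20 / 21 * r * (n.choose d : ℝ) ≤ (boundarySets n k C).card := by nlinarith
      have hpc2 : j * y - x ≤ p * n.choose d := by rwa [div_le_iff₀ hc0] at hp1
      calc (1 - p) ^ (boundarySets n k C).card ≤
            Real.exp (-p) ^ (boundarySets n k C).card :=
            pow_le_pow_left₀ (by linarith) (Real.one_sub_le_exp_neg p) _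
        _ = Real.exp ((boundarySets n k C).card * (-p)) := (Real.exp_nat_mul _ _).symm
        _ ≤ _ := by
          rw [Real.exp_le_exp]
          have c1 := mul_le_mul_of_nonneg_right hB2 hp0
          have c2 := mul_le_mul_of_nonneg_left hpc2 (by positivity : (0 : ℝ) ≤ 20 / 21 * r)
          nlinarith)
  refine hmain.trans ?_
  have hcpos : (1 : ℝ) ≤ 4 * j * k := by nlinarith
  set c := Real.log (4 * j * k) with hc
  have hcn : 0 ≤ c := Real.log_nonneg hcpos
  have f1 : (r * j + 1 : ℝ) ≤ Real.exp (r * j) := Real.add_one_le_exp _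
  have f2 : (4 : ℝ) ^ ((r * j) ^ k) ≤ Real.exp (2 * (r * j : ℝ) ^ k) := by
    have g : (4 : ℝ) ≤ Real.exp 2 := by
      have : Real.exp 2 = Real.exp 1 * Real.exp 1 := by rw [← Real.exp_add]; norm_num
      have g1 := Real.add_one_le_exp 1
      rw [this]; nlinarith
    calc (4 : ℝ) ^ ((r * j) ^ k) ≤ Real.exp 2 ^ ((r * j) ^ k) :=
          pow_le_pow_left₀ (by norm_num) g _
      _ = _ := by rw [← Real.exp_nat_mul]; push_cast; congr 1; ring
  have f3 : (n : ℝ) ^ j = Real.exp (j * y) := by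
    rw [Real.exp_nat_mul, hydef, Real.exp_log hnR]
  have f4 : (4 * j * k * y) ^ (r * j) = Real.exp (r * j * (c + x)) := by
    have : Real.exp (c + x) = 4 * j * k * y := by
      rw [Real.exp_add, hc, hxdef, Real.exp_log (by linarith), Real.exp_log (by linarith)]
    rw [← this, ← Real.exp_nat_mul]; push_cast; rfl
  have f5 : (n : ℝ) ^ (-(4 * (r : ℝ) * (j : ℝ)) / 7) =
      Real.exp (y * (-(4 * (r : ℝ) * (j : ℝ)) / 7)) := Real.rpow_def_of_pos hnR _
  rw [f3, f4, f5]
  calc _ ≤ Real.exp (r * j) * Real.exp (2 * (r * j : ℝ) ^ k) * Real.exp (j * y) *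
        Real.exp (r * j * (c + x)) * Real.exp (-(20 / 21 * r * (j * y - x))) := by
        gcongr
    _ = Real.exp (r * j + 2 * (r * j : ℝ) ^ k + j * y + r * j * (c + x) +
        -(20 / 21 * r * (j * y - x))) := by
        simp only [Real.exp_add]
    _ ≤ _ := by
        rw [Real.exp_le_exp]
        have x1 : x ≤ x ^ k := le_self_pow₀ hx (by omega)
        have x2 : x ^ 2 ≤ x ^ k := pow_le_pow_right₀ hx (by omega)
        have i1 : (r : ℝ) * j ≤ j * x ^ k := by nlinarith
        have i2 : (r * j : ℝ) ^ k ≤ j ^ k * x ^ k := by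
          rw [← mul_pow]
          exact pow_le_pow_left₀ (by positivity) (by nlinarith) _
        have i3 : r * j * (c + x) ≤ j * (c + 1) * x ^ k := by
          have s1 : r * (c + x) ≤ x * (c + x) := mul_le_mul_of_nonneg_right hrx (by linarith)
          have s2 : x * (c + x) ≤ (c + 1) * x ^ k := by nlinarith
          nlinarith
        have i4 : 20 / 21 * r * x ≤ x ^ k := by nlinarith
        have hsum : r * j + 2 * (r * j : ℝ) ^ k + r * j * (c + x) + 20 / 21 * r * x ≤ y / 7 := by
          rw [hK] at h1; nlinarith
        have i5 : y / 7 ≤ j * y * (8 * r / 21 - 1) := by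
          have : (1 : ℝ) / 7 ≤ 8 * r / 21 - 1 := by linarith
          nlinarith
        nlinarith

/-- **Case 1 estimate.** For `k ≥ 3`, `1 ≤ j ≤ k-1`, `ω = log log n`, and
`(j log n - ω)/C(n,k-j) ≤ p ≤ (j log n + ω)/C(n,k-j)`, the expected number `E(X_r)` of
`j`-components of `H^k(n,p)` consisting of exactly `r` `j`-sets, for any `r` with
`3 ≤ r ≤ log log n`, satisfies `E(X_r) ≤ n^{-4rj/7}` for all sufficiently large `n`. -/
theorem small_component_expectation (k j : ℕ) (hk : 3 ≤ k) (hj : 1 ≤ j) (hjk : j ≤ k - 1)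
    (p : ℕ → ℝ)
    (hp : ∀ᶠ n : ℕ in atTop,
      ((j : ℝ) * Real.log n - Real.log (Real.log n)) / (n.choose (k - j) : ℝ) ≤ p n ∧
        p n ≤ ((j : ℝ) * Real.log n + Real.log (Real.log n)) / (n.choose (k - j) : ℝ)) :
    ∀ᶠ n : ℕ in atTop, ∀ r : ℕ, 3 ≤ r → (r : ℝ) ≤ Real.log (Real.log n) →
      binomExp n k (p n) (fun H =>
          (Nat.card {C : Finset (Finset (Fin n)) // IsJComponent n j H C ∧ C.card = r} : ℝ)) ≤
        (n : ℝ) ^ (-(4 * (r : ℝ) * (j : ℝ)) / 7) := by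
  have hd : j < k := by omega
  obtain ⟨K, A, hA, hK⟩ : ∃ K A : ℝ, A = 4 * j * k + 42 * j * (2 * k) ^ k ∧
    K = j + 2 * j ^ k + j * (Real.log (4 * j * k) + 1) + 1 := ⟨_, _, rfl, rfl⟩
  have hlog : Tendsto (fun n : ℕ => Real.log n) atTop atTop :=
    Real.tendsto_log_atTop.comp tendsto_natCast_atTop_atTop
  have hloglog : Tendsto (fun n : ℕ => Real.log (Real.log n)) atTop atTop :=
    Real.tendsto_log_atTop.comp hlog
  have e1 := hlog.eventually (little_bound k (7 * K))
  have e2 := tendsto_natCast_atTop_atTop.eventually (little_bound 1 A)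
  filter_upwards [hp, e1, e2, hloglog.eventually_ge_atTop 1, hlog.eventually_ge_atTop 1,
    eventually_ge_atTop (2 * k)] with n hpn h1 h2 hx hy hnk r hr3 hrx
  exact final_step hk hj hd hr3 hnk (p n) K A hA hK hx hy hrx h1 (by simpa using h2) hpn.1 hpn.2

end
end
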